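/- arXiv:2203.00711 — 3 statements merged into one kernel-verified Lean document; each statement's English description precedes it below -/
import Mathlib

section
/- Assume α > 1, both λ and β are nondecreasing on [t₀,∞), b(t) > β'(t) + β(t)/t (equivalently w(t) > 0) for every t ≥ t₀, there exists ε ∈ (0, α−1) with (α−3)·w(t) − t·w'(t) ≥ ε·b(t) for every t ≥ t₀, ∫_{t₀}^{∞} [ λ'(t)²·t³·β(t)²/λ(t)⁴ − λ'(t)·t²·b(t)/(2·λ(t)²) ]_+ dt < +∞ (where [·]_+ denotes the positive part), and there exists C > 0 with (d/dt)(t²·b(t)) ≤ C·t·b(t) for every t ≥ t₀. Then t²·b(t)·(Φ(prox_{λ(t)Φ}(x(t))) − Φ*) → 0 as t → +∞, i.e. Φ(prox_{λ(t)Φ}(x(t))) − Φ* = o(1/(t²·b(t))). -/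
open Set MeasureTheory Filter Real

noncomputable section

/-- Convexity for extended-real-valued functions. -/
def EConvexOn {H : Type*} [NormedAddCommGroup H] [NormedSpace ℝ H] (f : H → EReal) : Prop :=
  ∀ x y : H, ∀ a c : ℝ, 0 ≤ a → 0 ≤ c → a + c = 1 →
    f (a • x + c • y) ≤ (a : EReal) * f x + (c : EReal) * f y

/-- `p` is the proximal point of `f` with parameter `l` at `x`, i.e. the (unique) minimizer of
`y ↦ f y + ‖x - y‖² / (2l)`. -/
def IsProxPt {H : Type*} [NormedAddCommGroup H] [InnerProductSpace ℝ H]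
    (f : H → EReal) (l : ℝ) (x p : H) : Prop :=
  ∀ y : H, f p + ((‖x - p‖ ^ 2 / (2 * l) : ℝ) : EReal)
      ≤ f y + ((‖x - y‖ ^ 2 / (2 * l) : ℝ) : EReal)

/-- The Moreau envelope of `f` with parameter `l` (as a real number). -/
def moreau {H : Type*} [NormedAddCommGroup H] [InnerProductSpace ℝ H]
    (f : H → EReal) (l : ℝ) (x : H) : ℝ :=
  (⨅ y : H, f y + ((‖x - y‖ ^ 2 / (2 * l) : ℝ) : EReal)).toReal

/-!
Let `z` minimize `Φ`, and let `δ t = Φ_λ(x) - Φ(z)`, which bounds `Φ(prox x) - Φ(z)` from above.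
A Lyapunov function built from `(α - 1 - ε / 2) (x - z) + t (x' + β ∇Φ_λ(x))` is nonnegative and
decreases at rate at least `ε / 2 * h`, where `h t = t b δ + t ‖x'‖²`; in particular `x` is bounded.
The scaled energy `W t = t² b δ + t² ‖x'‖² / 2` satisfies `W ≤ t h`, and its derivative is at most a
multiple of `h` plus an integrable function: monotonicity of `∂Φ` controls `⟪x', (d/dt) ∇Φ_λ(x)⟫`,
and `‖λ ∇Φ_λ(x)‖ ≤ ‖x - z‖` is bounded. Hence `W` converges; a positive limit would make
`h ≥ W / t` drive the Lyapunov function to `-∞`, so the limit is `0`.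
-/

open scoped Topology RealInnerProductSpace

section Analysis

variable {E : Type*} [NormedAddCommGroup E]

theorem hasFDerivAt_of_le_of_le [NormedSpace ℝ E] {l f u : E → ℝ} {f' : E →L[ℝ] ℝ} {t : E}
    (hl : HasFDerivAt l f' t) (hu : HasFDerivAt u f' t) (hlf : ∀ᶠ s in 𝓝 t, l s ≤ f s)
    (hfu : ∀ᶠ s in 𝓝 t, f s ≤ u s) (hlt : l t = f t) (hut : u t = f t) :
    HasFDerivAt f f' t := by
  rw [hasFDerivAt_iff_isLittleO] at *
  refine (Asymptotics.IsBigO.of_bound' ?_).trans_isLittleO (hl.norm_left.add hu.norm_left)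
  filter_upwards [hlf, hfu] with s hls hus
  have hlower := abs_le.1 (le_refl |l s - l t - f' (s - t)|)
  have hupper := abs_le.1 (le_refl |u s - u t - f' (s - t)|)
  refine (abs_le.2 ⟨?_, ?_⟩).trans (le_abs_self _) <;> simp only [Real.norm_eq_abs] <;> linarith

theorem inner_deriv_nonneg_of_inner_sub_nonneg [InnerProductSpace ℝ E] {p g : ℝ → E} {p' g' : E}
    {t : ℝ} (hp : HasDerivWithinAt p p' (Ioi t) t) (hg : HasDerivWithinAt g g' (Ioi t) t)
    (hmono : ∀ᶠ s in 𝓝[>] t, 0 ≤ ⟪g s - g t, p s - p t⟫) : 0 ≤ ⟪g', p'⟫ := by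
  have hslopes := ((hasDerivWithinAt_iff_tendsto_slope' self_notMem_Ioi).1 hg).inner (𝕜 := ℝ)
    ((hasDerivWithinAt_iff_tendsto_slope' self_notMem_Ioi).1 hp)
  refine ge_of_tendsto hslopes (hmono.mono fun s hs => ?_)
  simp only [slope_def_module, real_inner_smul_left, real_inner_smul_right]
  rw [← mul_assoc]
  exact mul_nonneg (mul_self_nonneg _) hs

theorem neg_inner_le_of_inner_sub_sub_nonneg [InnerProductSpace ℝ E] {u v g : E} {l m : ℝ}
    (hl : 0 < l) (hm : 0 ≤ m) (h : 0 ≤ ⟪u, v - m • g - l • u⟫) :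
    -⟪v, u⟫ ≤ m / l * ‖g‖ * ‖v‖ := by
  rcases le_or_gt 0 ⟪v, u⟫ with hvu | hvu
  · exact (neg_nonpos.2 hvu).trans (by positivity)
  rw [inner_sub_right, inner_sub_right, real_inner_smul_right, real_inner_smul_right,
    real_inner_self_eq_norm_sq, real_inner_comm] at h
  have hcauchy : -⟪u, g⟫ ≤ ‖u‖ * ‖g‖ := (neg_le_abs _).trans (abs_real_inner_le_norm u g)
  have hlu : l * ‖u‖ ≤ m * ‖g‖ := by
    have hu : 0 < ‖u‖ := norm_pos_iff.2 fun h0 => hvu.ne (by rw [h0, inner_zero_right])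
    refine le_of_mul_le_mul_left ?_ hu
    linarith [mul_le_mul_of_nonneg_left hcauchy hm]
  calc -⟪v, u⟫ ≤ ‖v‖ * ‖u‖ := (neg_le_abs _).trans (abs_real_inner_le_norm v u)
    _ ≤ ‖v‖ * (m * ‖g‖ / l) := by
      gcongr
      rwa [le_div_iff₀' hl]
    _ = m / l * ‖g‖ * ‖v‖ := by ring

variable {f q W h : ℝ → ℝ} {a B L κ K : ℝ}

theorem exists_tendsto_atTop_of_antitoneOn_Ici (hf : AntitoneOn f (Ici a))
    (hB : ∀ t ≥ a, B ≤ f t) : ∃ L, Tendsto f atTop (𝓝 L) := by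
  have hanti : Antitone fun t => f (max a t) := fun s t hst =>
    hf (le_max_left a s) (le_max_left a t) (max_le_max_left a hst)
  have hbdd : BddBelow (range fun t => f (max a t)) :=
    ⟨B, by rintro _ ⟨t, rfl⟩; exact hB _ (le_max_left a t)⟩
  refine ⟨_, (tendsto_atTop_ciInf hanti hbdd).congr' ?_⟩
  filter_upwards [eventually_ge_atTop a] with t ht
  rw [max_eq_right ht]

theorem antitoneOn_Ici_sub_integral_of_deriv_le (hf : ∀ t ≥ a, DifferentiableAt ℝ f t)
    (hfq : ∀ t ≥ a, deriv f t ≤ q t) (hq : IntegrableOn q (Ici a)) :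
    AntitoneOn (fun t => f t - ∫ r in a..t, q r) (Ici a) := by
  intro s (hs : a ≤ s) t _ hst
  have hint : ∀ {u v}, a ≤ u → IntegrableOn q (Icc u v) := fun hu =>
    hq.mono_set (Icc_subset_Ici_self.trans (Ici_subset_Ici.2 hu))
  have hincr : f t - f s ≤ ∫ r in s..t, q r :=
    intervalIntegral.sub_le_integral_of_hasDeriv_right_of_le hst
      (fun r hr => (hf r (hs.trans hr.1)).continuousAt.continuousWithinAt)
      (fun r hr => (hf r (hs.trans hr.1.le)).hasDerivAt.hasDerivWithinAt)
      (hint hs) fun r hr => hfq r (hs.trans hr.1.le)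
  have hadd := intervalIntegral.integral_add_adjacent_intervals (μ := volume) (f := q)
    ((intervalIntegrable_iff_integrableOn_Icc_of_le hs).2 (hint le_rfl))
    ((intervalIntegrable_iff_integrableOn_Icc_of_le hst).2 (hint hs))
  beta_reduce
  linarith

theorem exists_tendsto_atTop_of_deriv_le_integrable (hB : ∀ t ≥ a, B ≤ f t)
    (hf : ∀ t ≥ a, DifferentiableAt ℝ f t) (hfq : ∀ t ≥ a, deriv f t ≤ q t)
    (hq : IntegrableOn q (Ici a)) : ∃ L, Tendsto f atTop (𝓝 L) := by
  have hint : Tendsto (fun t => ∫ r in a..t, q r) atTop (𝓝 (∫ r in Ioi a, q r)) :=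
    intervalIntegral_tendsto_integral_Ioi a (hq.mono_set Ioi_subset_Ici_self) tendsto_id
  have hbound : ∀ t ≥ a, B - ∫ r in Ici a, ‖q r‖ ≤ f t - ∫ r in a..t, q r := by
    intro t ht
    have : ∫ r in a..t, q r ≤ ∫ r in Ici a, ‖q r‖ := by
      rw [intervalIntegral.integral_of_le ht]
      refine (le_norm_self _).trans ((norm_integral_le_integral_norm _).trans ?_)
      exact setIntegral_mono_set hq.norm (Eventually.of_forall fun _ => norm_nonneg _)
        (Eventually.of_forall fun r hr => le_of_lt hr.1)
    linarith [hB t ht]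
  obtain ⟨L, hL⟩ := exists_tendsto_atTop_of_antitoneOn_Ici
    (antitoneOn_Ici_sub_integral_of_deriv_le hf hfq hq) hbound
  exact ⟨_, (hL.add hint).congr fun t => sub_add_cancel _ _⟩

theorem nonpos_of_tendsto_of_deriv_le_neg_div (hB : ∀ t ≥ a, B ≤ f t)
    (hf : ∀ t ≥ a, DifferentiableAt ℝ f t) (hfW : ∀ t ≥ a, deriv f t ≤ -(W t / t))
    (hW : Tendsto W atTop (𝓝 L)) : L ≤ 0 := by
  by_contra! hL
  obtain ⟨T, hT⟩ := ((hW.eventually (lt_mem_nhds (half_lt_self hL))).and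
    ((eventually_ge_atTop a).and (eventually_gt_atTop 0))).exists_forall_of_atTop
  have hderiv : ∀ t ≥ T, HasDerivAt (fun t => f t + L / 2 * Real.log t)
      (deriv f t + L / 2 * t⁻¹) t := fun t ht =>
    (hf t (hT t ht).2.1).hasDerivAt.add ((Real.hasDerivAt_log (hT t ht).2.2.ne').const_mul _)
  have hanti : AntitoneOn (fun t => f t + L / 2 * Real.log t) (Ici T) := by
    refine antitoneOn_of_hasDerivWithinAt_nonpos (convex_Ici T)
      (fun t ht => (hderiv t ht).continuousAt.continuousWithinAt)
      (fun t ht => (hderiv t (interior_subset ht)).hasDerivWithinAt) fun t ht => ?_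
    obtain ⟨hLW, hat, htpos⟩ := hT t (interior_subset ht)
    have hdiv : L / 2 * t⁻¹ ≤ W t / t := by
      rw [div_eq_mul_inv (W t)]
      gcongr
    linarith [hfW t hat]
  have hlog : Tendsto (fun t => L / 2 * Real.log t) atTop atTop :=
    Real.tendsto_log_atTop.const_mul_atTop (half_pos hL)
  obtain ⟨t, hlarge, htT⟩ := ((hlog.eventually_gt_atTop (f T + L / 2 * Real.log T - B)).and
    (eventually_ge_atTop T)).exists
  have hle := hanti self_mem_Ici htT htT
  beta_reduce at hle
  linarith [hB t (hT t htT).2.1]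

theorem tendsto_zero_of_deriv_le_of_le_mul (ha : 0 < a) (hκ : 0 < κ) (hK : 0 ≤ K)
    (hB : ∀ t ≥ a, B ≤ f t) (hf : ∀ t ≥ a, DifferentiableAt ℝ f t)
    (hfh : ∀ t ≥ a, deriv f t ≤ -(κ * h t)) (hW0 : ∀ t ≥ a, 0 ≤ W t)
    (hW : ∀ t ≥ a, DifferentiableAt ℝ W t) (hWh : ∀ t ≥ a, W t ≤ t * h t)
    (hWq : ∀ t ≥ a, deriv W t ≤ K * h t + q t) (hq : IntegrableOn q (Ici a)) :
    Tendsto W atTop (𝓝 0) := by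
  have hfW : ∀ t ≥ a, deriv f t ≤ -(κ * W t / t) := fun t ht => by
    have : W t / t ≤ h t := (div_le_iff₀' (ha.trans_le ht)).2 (hWh t ht)
    rw [mul_div_assoc]
    exact (hfh t ht).trans (neg_le_neg (by gcongr))
  obtain ⟨Lf, hLf⟩ : ∃ L, Tendsto f atTop (𝓝 L) :=
    exists_tendsto_atTop_of_deriv_le_integrable (q := 0) hB hf
      (fun t ht => (hfW t ht).trans <| neg_nonpos.2 <|
        div_nonneg (mul_nonneg hκ.le (hW0 t ht)) (ha.le.trans ht)) integrableOn_zero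
  -- Adding `K / κ * f` absorbs the term `K * h` of `deriv W`.
  obtain ⟨Ls, hLs⟩ : ∃ L, Tendsto (fun t => W t + K / κ * f t) atTop (𝓝 L) := by
    refine exists_tendsto_atTop_of_deriv_le_integrable (B := K / κ * B) (fun t ht => ?_)
      (fun t ht => (hW t ht).add ((hf t ht).const_mul _)) (fun t ht => ?_) hq
    · have : K / κ * B ≤ K / κ * f t := by gcongr; exact hB t ht
      linarith [hW0 t ht]
    · have habsorb : K / κ * deriv f t ≤ -(K * h t) :=
        calc K / κ * deriv f t ≤ K / κ * -(κ * h t) := by gcongr; exact hfh t ht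
          _ = -(K * h t) := by field_simp
      rw [deriv_fun_add (hW t ht) ((hf t ht).const_mul _), deriv_const_mul _ (hf t ht)]
      linarith [hWq t ht]
  have hLW : Tendsto W atTop (𝓝 (Ls - K / κ * Lf)) :=
    (hLs.sub (hLf.const_mul (K / κ))).congr fun t => add_sub_cancel_right _ _
  have hnonneg : 0 ≤ Ls - K / κ * Lf :=
    ge_of_tendsto hLW ((eventually_ge_atTop a).mono hW0)
  have hnonpos : κ * (Ls - K / κ * Lf) ≤ 0 :=
    nonpos_of_tendsto_of_deriv_le_neg_div hB hf hfW (hLW.const_mul κ)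
  rwa [le_antisymm (nonpos_of_mul_nonpos_right hnonpos hκ) hnonneg] at hLW

end Analysis

theorem ne_top_of_forall_le {ι γ : Type*} [PartialOrder γ] [OrderTop γ] {f : ι → γ} {z : ι}
    (hproper : ∃ y, f y ≠ ⊤) (hz : ∀ y, f z ≤ f y) : f z ≠ ⊤ :=
  let ⟨y, hy⟩ := hproper
  ne_top_of_le_ne_top hy (hz y)

section Prox

variable {H : Type*} [NormedAddCommGroup H] [InnerProductSpace ℝ H] {f : H → EReal}
  {l : ℝ} {x y p g : H}

/-- `g` is a subgradient of the extended-real-valued function `f` at `p`, i.e. `g ∈ ∂f(p)` when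
`f p` is finite. -/
def IsSubgradientAt (f : H → EReal) (g p : H) : Prop :=
  ∀ y, f p + (⟪g, y - p⟫ : ℝ) ≤ f y

theorem IsSubgradientAt.toReal_add_inner_le (hbot : ∀ y, f y ≠ ⊥) (hg : IsSubgradientAt f g p)
    (hp : f p ≠ ⊤) (hy : f y ≠ ⊤) : (f p).toReal + ⟪g, y - p⟫ ≤ (f y).toReal := by
  have h := hg y
  rw [← EReal.coe_toReal hp (hbot p), ← EReal.coe_toReal hy (hbot y)] at h
  exact_mod_cast h

theorem IsSubgradientAt.inner_sub_nonneg {g' p' : H} (hbot : ∀ y, f y ≠ ⊥)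
    (hg : IsSubgradientAt f g p) (hg' : IsSubgradientAt f g' p') (hp : f p ≠ ⊤)
    (hp' : f p' ≠ ⊤) : 0 ≤ ⟪g - g', p - p'⟫ := by
  have h := hg.toReal_add_inner_le hbot hp hp'
  have h' := hg'.toReal_add_inner_le hbot hp' hp
  rw [← neg_sub p p', inner_neg_right] at h
  rw [inner_sub_left]
  linarith

theorem inner_sub_mul_norm_sq_le_norm_sq_div (hl : 0 < l) (g u : H) :
    ⟪g, u⟫ - l / 2 * ‖g‖ ^ 2 ≤ ‖u‖ ^ 2 / (2 * l) := by
  have h : 0 ≤ ‖u - l • g‖ ^ 2 := sq_nonneg _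
  rw [norm_sub_sq_real, real_inner_smul_right, norm_smul, mul_pow, Real.norm_eq_abs, sq_abs,
    real_inner_comm] at h
  rw [le_div_iff₀ (by positivity)]
  linarith

theorem IsSubgradientAt.add_inner_sub_le (hg : IsSubgradientAt f g p) (hl : 0 < l) (x y : H) :
    f p + ((⟪g, x - p⟫ - l / 2 * ‖g‖ ^ 2 : ℝ) : EReal)
      ≤ f y + ((‖x - y‖ ^ 2 / (2 * l) : ℝ) : EReal) := by
  have hsplit : ⟪g, x - p⟫ = ⟪g, y - p⟫ + ⟪g, x - y⟫ := by
    rw [← inner_add_right]; congr 1; abel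
  calc f p + ((⟪g, x - p⟫ - l / 2 * ‖g‖ ^ 2 : ℝ) : EReal)
      ≤ f p + ((⟪g, y - p⟫ + ‖x - y‖ ^ 2 / (2 * l) : ℝ) : EReal) := by
        gcongr
        linarith [inner_sub_mul_norm_sq_le_norm_sq_div hl g (x - y)]
    _ = f p + (⟪g, y - p⟫ : ℝ) + ((‖x - y‖ ^ 2 / (2 * l) : ℝ) : EReal) := by
        rw [EReal.coe_add, add_assoc]
    _ ≤ f y + ((‖x - y‖ ^ 2 / (2 * l) : ℝ) : EReal) := by
        gcongr
        exact hg y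

theorem IsSubgradientAt.coe_moreau (hbot : f p ≠ ⊥) (htop : f p ≠ ⊤)
    (hg : IsSubgradientAt f g p) (hl : 0 < l) (x : H) :
    (moreau f l x : EReal) = ⨅ y, f y + ((‖x - y‖ ^ 2 / (2 * l) : ℝ) : EReal) := by
  have hlower := le_iInf fun y => hg.add_inner_sub_le hl x y
  have hupper := iInf_le (fun y => f y + ((‖x - y‖ ^ 2 / (2 * l) : ℝ) : EReal)) p
  rw [← EReal.coe_toReal htop hbot, ← EReal.coe_add] at hlower hupper
  exact EReal.coe_toReal (ne_top_of_le_ne_top (EReal.coe_ne_top _) hupper)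
    (ne_bot_of_le_ne_bot (EReal.coe_ne_bot _) hlower)

theorem IsSubgradientAt.le_moreau (hbot : f p ≠ ⊥) (htop : f p ≠ ⊤)
    (hg : IsSubgradientAt f g p) (hl : 0 < l) (x : H) :
    (f p).toReal + (⟪g, x - p⟫ - l / 2 * ‖g‖ ^ 2) ≤ moreau f l x := by
  rw [← EReal.coe_le_coe_iff, hg.coe_moreau hbot htop hl, EReal.coe_add,
    EReal.coe_toReal htop hbot]
  exact le_iInf fun y => hg.add_inner_sub_le hl x y

theorem IsSubgradientAt.moreau_le (hbot : f p ≠ ⊥) (htop : f p ≠ ⊤)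
    (hg : IsSubgradientAt f g p) (hl : 0 < l) (x : H) :
    moreau f l x ≤ (f p).toReal + ‖x - p‖ ^ 2 / (2 * l) := by
  rw [← EReal.coe_le_coe_iff, hg.coe_moreau hbot htop hl, EReal.coe_add,
    EReal.coe_toReal htop hbot]
  exact iInf_le _ p

namespace IsProxPt

theorem ne_top (hp : IsProxPt f l x p) (hproper : ∃ y, f y ≠ ⊤) : f p ≠ ⊤ := by
  obtain ⟨y, hy⟩ := hproper
  intro htop
  have hle := hp y
  rw [htop, EReal.top_add_coe, top_le_iff] at hle
  exact (EReal.add_lt_top hy (EReal.coe_ne_top _)).ne hle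

theorem norm_sub_le {z : H} (hbot : f p ≠ ⊥) (htop : f p ≠ ⊤) (hp : IsProxPt f l x p)
    (hl : 0 < l) (hz : f z ≤ f p) : ‖x - p‖ ≤ ‖x - z‖ := by
  have hle := (hp z).trans (add_le_add_left hz _)
  rw [← EReal.coe_toReal htop hbot] at hle
  have hle' : ‖x - p‖ ^ 2 / (2 * l) ≤ ‖x - z‖ ^ 2 / (2 * l) :=
    le_of_add_le_add_left (a := (f p).toReal) (by exact_mod_cast hle)
  rwa [div_le_div_iff_of_pos_right (by positivity),
    sq_le_sq₀ (norm_nonneg _) (norm_nonneg _)] at hle'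

theorem toReal_add_inner_le_add_mul {θ : ℝ} (hbot : ∀ y, f y ≠ ⊥) (hconv : EConvexOn f)
    (hp : IsProxPt f l x p) (hl : 0 < l) (hpt : f p ≠ ⊤) (hyt : f y ≠ ⊤) (hθ : 0 < θ)
    (hθ1 : θ ≤ 1) :
    (f p).toReal + ⟪l⁻¹ • (x - p), y - p⟫ ≤ (f y).toReal + θ * (‖y - p‖ ^ 2 / (2 * l)) := by
  have hmin := (hp ((1 - θ) • p + θ • y)).trans
    (add_le_add_left (hconv p y (1 - θ) θ (by linarith) hθ.le (by ring)) _)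
  lift f p to ℝ using ⟨hpt, hbot p⟩ with P
  lift f y to ℝ using ⟨hyt, hbot y⟩ with Y
  replace hmin : P + ‖x - p‖ ^ 2 / (2 * l)
      ≤ (1 - θ) * P + θ * Y + ‖x - ((1 - θ) • p + θ • y)‖ ^ 2 / (2 * l) := by exact_mod_cast hmin
  have hexpand : ‖x - ((1 - θ) • p + θ • y)‖ ^ 2 / (2 * l) = ‖x - p‖ ^ 2 / (2 * l)
      - θ * ⟪l⁻¹ • (x - p), y - p⟫ + θ * (θ * (‖y - p‖ ^ 2 / (2 * l))) := by
    rw [show x - ((1 - θ) • p + θ • y) = (x - p) - θ • (y - p) by module,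
      norm_sub_sq_real, real_inner_smul_right, real_inner_smul_left, norm_smul, mul_pow,
      Real.norm_eq_abs, sq_abs]
    field_simp
  rw [EReal.toReal_coe, EReal.toReal_coe]
  refine le_of_mul_le_mul_left ?_ hθ
  linarith

theorem isSubgradientAt (hbot : ∀ y, f y ≠ ⊥) (hconv : EConvexOn f) (hp : IsProxPt f l x p)
    (hl : 0 < l) : IsSubgradientAt f (l⁻¹ • (x - p)) p := by
  intro y
  rcases eq_or_ne (f y) ⊤ with hyt | hyt
  · exact hyt ▸ le_top
  have hpt : f p ≠ ⊤ := hp.ne_top ⟨y, hyt⟩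
  have hlim : Tendsto (fun θ : ℝ => (f y).toReal + θ * (‖y - p‖ ^ 2 / (2 * l))) (𝓝[>] 0)
      (𝓝 (f y).toReal) := by
    have hcont : Continuous fun θ : ℝ => (f y).toReal + θ * (‖y - p‖ ^ 2 / (2 * l)) := by fun_prop
    simpa using hcont.tendsto' 0 _ rfl |>.mono_left nhdsWithin_le_nhds
  have hle : (f p).toReal + ⟪l⁻¹ • (x - p), y - p⟫ ≤ (f y).toReal := by
    refine ge_of_tendsto hlim ?_
    filter_upwards [Ioc_mem_nhdsGT one_pos] with θ hθ
    exact hp.toReal_add_inner_le_add_mul hbot hconv hl hpt hyt hθ.1 hθ.2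
  rw [← EReal.coe_toReal hpt (hbot p), ← EReal.coe_toReal hyt (hbot y)]
  exact_mod_cast hle

theorem moreau_eq (hbot : f p ≠ ⊥) (htop : f p ≠ ⊤) (hp : IsProxPt f l x p) :
    moreau f l x = (f p).toReal + ‖x - p‖ ^ 2 / (2 * l) := by
  have hinf : ⨅ y, f y + ((‖x - y‖ ^ 2 / (2 * l) : ℝ) : EReal)
      = f p + ((‖x - p‖ ^ 2 / (2 * l) : ℝ) : EReal) := le_antisymm (iInf_le _ p) (le_iInf hp)
  rw [moreau, hinf, EReal.toReal_add htop hbot (EReal.coe_ne_top _) (EReal.coe_ne_bot _),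
    EReal.toReal_coe]

theorem moreau_add_inner_le {z : H} (hbot : ∀ y, f y ≠ ⊥) (hconv : EConvexOn f)
    (hp : IsProxPt f l x p) (hl : 0 < l) (hz : f z ≠ ⊤) :
    moreau f l x + ⟪l⁻¹ • (x - p), z - x⟫ ≤ (f z).toReal := by
  have htop : f p ≠ ⊤ := hp.ne_top ⟨z, hz⟩
  have hsub := (hp.isSubgradientAt hbot hconv hl).toReal_add_inner_le hbot htop hz
  have hsplit : ⟪l⁻¹ • (x - p), z - x⟫ = ⟪l⁻¹ • (x - p), z - p⟫ - ‖x - p‖ ^ 2 / l := by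
    rw [← sub_sub_sub_cancel_right z x p, inner_sub_right, real_inner_smul_left _ (x - p),
      real_inner_self_eq_norm_sq, inv_mul_eq_div]
  have hhalf : ‖x - p‖ ^ 2 / (2 * l) ≤ ‖x - p‖ ^ 2 / l := by gcongr; linarith
  rw [hp.moreau_eq (hbot p) htop, hsplit]
  linarith

-- The envelope is squeezed between two smooth functions that touch it at `t`: the quadratic model
-- through the fixed point `p`, and the envelope of the affine minorant of `f` at `p`.
theorem hasDerivAt_moreau {x : ℝ → H} {l : ℝ → ℝ} {x' : H} {l' t : ℝ} (hbot : ∀ y, f y ≠ ⊥)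
    (hconv : EConvexOn f) (htop : f p ≠ ⊤) (hp : IsProxPt f (l t) (x t) p) (hlpos : 0 < l t)
    (hx : HasDerivAt x x' t) (hl : HasDerivAt l l' t) :
    HasDerivAt (fun s => moreau f (l s) (x s))
      (⟪(l t)⁻¹ • (x t - p), x'⟫ - l' / 2 * ‖(l t)⁻¹ • (x t - p)‖ ^ 2) t := by
  set g := (l t)⁻¹ • (x t - p) with hg
  have hxp : x t - p = l t • g := by rw [hg, smul_inv_smul₀ hlpos.ne']
  have hsub : IsSubgradientAt f g p := hp.isSubgradientAt hbot hconv hlpos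
  have hlnear : ∀ᶠ s in 𝓝 t, 0 < l s := hl.continuousAt.eventually (lt_mem_nhds hlpos)
  have hlower : HasDerivAt (fun s => (f p).toReal + (⟪g, x s - p⟫ - l s / 2 * ‖g‖ ^ 2))
      (⟪g, x'⟫ - l' / 2 * ‖g‖ ^ 2) t := by
    have hinner : HasDerivAt (fun s => ⟪g, x s - p⟫) ⟪g, x'⟫ t := by
      simpa using (hasDerivAt_const t g).inner ℝ (hx.sub_const p)
    exact (hinner.sub ((hl.div_const 2).mul_const _)).const_add _
  have hupper : HasDerivAt (fun s => (f p).toReal + ‖x s - p‖ ^ 2 / (2 * l s))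
      (⟪g, x'⟫ - l' / 2 * ‖g‖ ^ 2) t := by
    refine (((hx.sub_const p).norm_sq.div (hl.const_mul 2) (by positivity)).const_add _).congr_deriv
      ?_
    rw [hxp, real_inner_smul_left, norm_smul, mul_pow, Real.norm_eq_abs, sq_abs]
    field_simp
  have hmoreau := hp.moreau_eq (hbot p) htop
  have htouch : (f p).toReal + (⟪g, x t - p⟫ - l t / 2 * ‖g‖ ^ 2) = moreau f (l t) (x t) := by
    simp only [hmoreau, hxp, real_inner_smul_right, real_inner_self_eq_norm_sq, norm_smul, mul_pow,
      Real.norm_eq_abs, sq_abs]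
    field_simp
    ring
  exact hasFDerivAt_of_le_of_le hlower.hasFDerivAt hupper.hasFDerivAt
    (hlnear.mono fun s hs => hsub.le_moreau (hbot p) htop hs (x s))
    (hlnear.mono fun s hs => hsub.moreau_le (hbot p) htop hs (x s)) htouch hmoreau.symm

end IsProxPt

end Prox

/-- A solution on `[t₀, ∞)` of the inertial system with Hessian-driven damping
`x'' + (α / t) x' + β (d/dt) ∇Φ_λ(x) + b ∇Φ_λ(x) = 0` for a proper convex `Φ` and a nondecreasing
`λ`. The primed fields are the derivatives of the unprimed ones, `v = x'`, `acc = x''`, `p t` is the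
proximal point of `x t`, and `G'` is the derivative of `∇Φ_λ(x) = λ⁻¹ (x - p)`. -/
structure InertialMoreauFlow {H : Type*} [NormedAddCommGroup H] [InnerProductSpace ℝ H]
    (Φ : H → EReal) where
  (t₀ α : ℝ)
  (β b lam β' b' lam' : ℝ → ℝ)
  (x v acc p G' : ℝ → H)
  ne_bot : ∀ y, Φ y ≠ ⊥
  proper : ∃ y, Φ y ≠ ⊤
  convex : EConvexOn Φ
  t₀_pos : 0 < t₀
  β_nonneg : ∀ t ≥ t₀, 0 ≤ β t
  b_pos : ∀ t ≥ t₀, 0 < b t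
  lam_pos : ∀ t ≥ t₀, 0 < lam t
  lam_monotoneOn : MonotoneOn lam (Ici t₀)
  hasDerivAt_β : ∀ t ≥ t₀, HasDerivAt β (β' t) t
  hasDerivAt_b : ∀ t ≥ t₀, HasDerivAt b (b' t) t
  hasDerivAt_lam : ∀ t ≥ t₀, HasDerivAt lam (lam' t) t
  hasDerivAt_x : ∀ t ≥ t₀, HasDerivAt x (v t) t
  hasDerivAt_v : ∀ t ≥ t₀, HasDerivAt v (acc t) t
  isProxPt : ∀ t ≥ t₀, IsProxPt Φ (lam t) (x t) (p t)
  hasDerivAt_grad : ∀ t ≥ t₀, HasDerivAt (fun s => (lam s)⁻¹ • (x s - p s)) (G' t) t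
  ode : ∀ t ≥ t₀, acc t + (α / t) • v t + β t • G' t + b t • ((lam t)⁻¹ • (x t - p t)) = 0

namespace InertialMoreauFlow

variable {H : Type*} [NormedAddCommGroup H] [InnerProductSpace ℝ H] {Φ : H → EReal}
  (S : InertialMoreauFlow Φ) {z : H} {t : ℝ}

/-- The gradient `∇Φ_λ(x)` of the Moreau envelope along the trajectory. -/
def grad (t : ℝ) : H := (S.lam t)⁻¹ • (S.x t - S.p t)

/-- The gap `Φ_λ(x) - Φ(z)` of the Moreau envelope along the trajectory; it is meant for a
minimizer `z` of `Φ`. -/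
def gap (z : H) (t : ℝ) : ℝ := moreau Φ (S.lam t) (S.x t) - (Φ z).toReal

/-- The coefficient `w = b - β' - β / t`. -/
def w (t : ℝ) : ℝ := S.b t - S.β' t - S.β t / t

/-- The integrand whose positive part is assumed integrable. -/
def perturbation (t : ℝ) : ℝ :=
  S.lam' t ^ 2 * t ^ 3 * S.β t ^ 2 / S.lam t ^ 4 - S.lam' t * t ^ 2 * S.b t / (2 * S.lam t ^ 2)

/-- The Lyapunov function: it decreases along the flow for suitable `c ∈ [0, α - 1]`. -/
def lyapunov (c : ℝ) (z : H) (t : ℝ) : ℝ :=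
  1 / 2 * ‖c • (S.x t - z) + t • (S.v t + S.β t • S.grad t)‖ ^ 2
    + (t ^ 2 * S.w t + (S.α - 1 - c) * (t * S.β t)) * S.gap z t
    + c * (S.α - 1 - c) / 2 * ‖S.x t - z‖ ^ 2

/-- The total mechanical energy, scaled by `t ^ 2`. -/
def scaledEnergy (z : H) (t : ℝ) : ℝ :=
  1 / 2 * (t ^ 2 * ‖S.v t‖ ^ 2) + t ^ 2 * S.b t * S.gap z t

/-- The rate at which the Lyapunov function is dissipated, up to a constant factor. -/
def dissipation (z : H) (t : ℝ) : ℝ := t * S.b t * S.gap z t + t * ‖S.v t‖ ^ 2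

theorem pos_of_ge (ht : t ≥ S.t₀) : 0 < t := S.t₀_pos.trans_le ht

theorem p_ne_top (ht : t ≥ S.t₀) : Φ (S.p t) ≠ ⊤ := (S.isProxPt t ht).ne_top S.proper

theorem sub_p_eq_smul_grad (ht : t ≥ S.t₀) : S.x t - S.p t = S.lam t • S.grad t := by
  rw [grad, smul_inv_smul₀ (S.lam_pos t ht).ne']

theorem acc_eq (ht : t ≥ S.t₀) :
    S.acc t = -((S.α / t) • S.v t + S.β t • S.G' t + S.b t • S.grad t) := by
  rw [eq_neg_iff_add_eq_zero, ← add_assoc, ← add_assoc]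
  exact S.ode t ht

theorem isSubgradientAt_grad (ht : t ≥ S.t₀) : IsSubgradientAt Φ (S.grad t) (S.p t) :=
  (S.isProxPt t ht).isSubgradientAt S.ne_bot S.convex (S.lam_pos t ht)

theorem lam'_nonneg (ht : t ≥ S.t₀) : 0 ≤ S.lam' t := by
  rw [← (S.hasDerivAt_lam t ht).hasDerivWithinAt.derivWithin (uniqueDiffOn_Ici S.t₀ t ht)]
  exact S.lam_monotoneOn.derivWithin_nonneg

theorem hasDerivWithinAt_p (ht : t ≥ S.t₀) :
    HasDerivWithinAt S.p (S.v t - S.lam' t • S.grad t - S.lam t • S.G' t) (Ioi t) t := by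
  have hderiv : HasDerivAt (fun s => S.x s - S.lam s • S.grad s)
      (S.v t - S.lam' t • S.grad t - S.lam t • S.G' t) t :=
    ((S.hasDerivAt_x t ht).sub ((S.hasDerivAt_lam t ht).smul (S.hasDerivAt_grad t ht))).congr_deriv
      (by rw [grad]; abel)
  have hp : ∀ s ≥ S.t₀, S.p s = S.x s - S.lam s • S.grad s := fun s hs => by
    rw [← S.sub_p_eq_smul_grad hs, sub_sub_cancel]
  exact hderiv.hasDerivWithinAt.congr (fun s hs => hp s (ht.trans hs.le)) (hp t ht)

-- The subdifferential of `Φ` is monotone, so `⟪G', p'⟫ ≥ 0`, and `p' = v - λ' ∇Φ_λ(x) - λ G'`.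
theorem neg_inner_v_G'_le (ht : t ≥ S.t₀) :
    -⟪S.v t, S.G' t⟫ ≤ S.lam' t / S.lam t * ‖S.grad t‖ * ‖S.v t‖ := by
  refine neg_inner_le_of_inner_sub_sub_nonneg (S.lam_pos t ht) (S.lam'_nonneg ht) <|
    inner_deriv_nonneg_of_inner_sub_nonneg (S.hasDerivWithinAt_p ht)
      (S.hasDerivAt_grad t ht).hasDerivWithinAt ?_
  filter_upwards [self_mem_nhdsWithin] with s hs
  have hs₀ : s ≥ S.t₀ := ht.trans (le_of_lt hs)
  exact (S.isSubgradientAt_grad hs₀).inner_sub_nonneg S.ne_bot (S.isSubgradientAt_grad ht)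
    (S.p_ne_top hs₀) (S.p_ne_top ht)

theorem hasDerivAt_gap (z : H) (ht : t ≥ S.t₀) :
    HasDerivAt (S.gap z) (⟪S.grad t, S.v t⟫ - S.lam' t / 2 * ‖S.grad t‖ ^ 2) t :=
  ((S.isProxPt t ht).hasDerivAt_moreau S.ne_bot S.convex (S.p_ne_top ht) (S.lam_pos t ht)
    (S.hasDerivAt_x t ht) (S.hasDerivAt_lam t ht)).sub_const _

theorem toReal_sub_le_gap (z : H) (ht : t ≥ S.t₀) :
    (Φ (S.p t)).toReal - (Φ z).toReal ≤ S.gap z t := by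
  have hlam := S.lam_pos t ht
  have : 0 ≤ ‖S.x t - S.p t‖ ^ 2 / (2 * S.lam t) := by positivity
  rw [gap, (S.isProxPt t ht).moreau_eq (S.ne_bot _) (S.p_ne_top ht)]
  linarith

theorem toReal_sub_nonneg (hz : ∀ y, Φ z ≤ Φ y) (ht : t ≥ S.t₀) :
    0 ≤ (Φ (S.p t)).toReal - (Φ z).toReal :=
  sub_nonneg.2 (EReal.toReal_le_toReal (hz _) (S.ne_bot z) (S.p_ne_top ht))

theorem gap_nonneg (hz : ∀ y, Φ z ≤ Φ y) (ht : t ≥ S.t₀) : 0 ≤ S.gap z t :=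
  (S.toReal_sub_nonneg hz ht).trans (S.toReal_sub_le_gap z ht)

theorem gap_le_inner (hz : Φ z ≠ ⊤) (ht : t ≥ S.t₀) :
    S.gap z t ≤ ⟪S.grad t, S.x t - z⟫ := by
  have h := (S.isProxPt t ht).moreau_add_inner_le S.ne_bot S.convex (S.lam_pos t ht) hz
  rw [← neg_sub (S.x t) z, inner_neg_right] at h
  rw [gap, grad]
  linarith

theorem lam_sq_mul_norm_grad_sq_le (hz : ∀ y, Φ z ≤ Φ y) (ht : t ≥ S.t₀) :
    S.lam t ^ 2 * ‖S.grad t‖ ^ 2 ≤ ‖S.x t - z‖ ^ 2 := by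
  have hnorm : ‖S.x t - S.p t‖ ≤ ‖S.x t - z‖ :=
    (S.isProxPt t ht).norm_sub_le (S.ne_bot _) (S.p_ne_top ht) (S.lam_pos t ht) (hz _)
  rw [S.sub_p_eq_smul_grad ht, norm_smul, Real.norm_of_nonneg (S.lam_pos t ht).le] at hnorm
  rw [← mul_pow]
  exact pow_le_pow_left₀ (mul_nonneg (S.lam_pos t ht).le (norm_nonneg _)) hnorm 2

theorem dissipation_nonneg (hz : ∀ y, Φ z ≤ Φ y) (ht : t ≥ S.t₀) : 0 ≤ S.dissipation z t := by
  have htpos := S.pos_of_ge ht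
  have hb := S.b_pos t ht
  have hgap := S.gap_nonneg hz ht
  rw [dissipation]
  positivity

section Lyapunov

variable {c w' ε : ℝ}

theorem hasDerivAt_lyapunov_vector (c : ℝ) (z : H) (ht : t ≥ S.t₀) :
    HasDerivAt (fun s => c • (S.x s - z) + s • (S.v s + S.β s • S.grad s))
      (-(S.α - 1 - c) • S.v t - (t * S.w t) • S.grad t) t := by
  have htpos := S.pos_of_ge ht
  refine ((((S.hasDerivAt_x t ht).sub_const z).const_smul c).add ((hasDerivAt_id t).smul
    ((S.hasDerivAt_v t ht).add
      ((S.hasDerivAt_β t ht).smul (S.hasDerivAt_grad t ht))))).congr_deriv ?_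
  simp only [← grad.eq_1, id, S.acc_eq ht, Pi.add_apply, Pi.smul_apply', w]
  match_scalars <;> field_simp <;> ring

theorem hasDerivAt_lyapunov (c : ℝ) (z : H) (ht : t ≥ S.t₀) (hw' : HasDerivAt S.w w' t) :
    HasDerivAt (S.lyapunov c z)
      ((2 * t * S.w t + t ^ 2 * w' + (S.α - 1 - c) * (S.β t + t * S.β' t)) * S.gap z t
        - c * t * S.w t * ⟪S.grad t, S.x t - z⟫ - (S.α - 1 - c) * t * ‖S.v t‖ ^ 2
        - (t ^ 2 * S.w t + (S.α - 1 - c) * (t * S.β t)) * (S.lam' t / 2 * ‖S.grad t‖ ^ 2)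
        - t ^ 2 * S.β t * S.w t * ‖S.grad t‖ ^ 2) t := by
  have hsq : HasDerivAt (fun s : ℝ => s ^ 2) (2 * t) t := by simpa using hasDerivAt_pow 2 t
  have hweight : HasDerivAt (fun s => s ^ 2 * S.w s + (S.α - 1 - c) * (s * S.β s))
      (2 * t * S.w t + t ^ 2 * w' + (S.α - 1 - c) * (S.β t + t * S.β' t)) t :=
    ((hsq.mul hw').add
      (((hasDerivAt_id t).mul (S.hasDerivAt_β t ht)).const_mul (S.α - 1 - c))).congr_deriv (by simp)
  refine ((((S.hasDerivAt_lyapunov_vector c z ht).norm_sq.const_mul (1 / 2)).add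
    (hweight.mul (S.hasDerivAt_gap z ht))).add
    (((S.hasDerivAt_x t ht).sub_const z).norm_sq.const_mul
      (c * (S.α - 1 - c) / 2))).congr_deriv ?_
  simp only [inner_add_left, inner_sub_right, inner_smul_left, inner_smul_right, inner_neg_right,
    real_inner_self_eq_norm_sq, inner_sub_left, neg_smul, conj_trivial]
  rw [real_inner_comm (S.x t) (S.grad t), real_inner_comm z (S.grad t),
    real_inner_comm (S.v t) (S.grad t)]
  ring

theorem deriv_lyapunov_le (hz : ∀ y, Φ z ≤ Φ y) (hc : 0 ≤ c) (hcα : c ≤ S.α - 1)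
    (ht : t ≥ S.t₀) (hw : 0 ≤ S.w t) (hw' : HasDerivAt S.w w' t)
    (hε : ε * S.b t ≤ (S.α - 3) * S.w t - t * w') :
    deriv (S.lyapunov c z) t ≤ -((ε - (S.α - 1 - c)) * (t * S.b t * S.gap z t)
      + (S.α - 1 - c) * (t * ‖S.v t‖ ^ 2)) := by
  have htpos := S.pos_of_ge ht
  have hβ := S.β_nonneg t ht
  have hlam' := S.lam'_nonneg ht
  have hgap := S.gap_nonneg hz ht
  have : 0 ≤ S.α - 1 - c := sub_nonneg.2 hcα
  have hinner : c * t * S.w t * S.gap z t ≤ c * t * S.w t * ⟪S.grad t, S.x t - z⟫ := by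
    gcongr
    exact S.gap_le_inner (ne_top_of_forall_le S.proper hz) ht
  have hlamTerm : 0 ≤ (t ^ 2 * S.w t + (S.α - 1 - c) * (t * S.β t))
      * (S.lam' t / 2 * ‖S.grad t‖ ^ 2) := by positivity
  have hβTerm : 0 ≤ t ^ 2 * S.β t * S.w t * ‖S.grad t‖ ^ 2 := by positivity
  have hgrowth := mul_le_mul_of_nonneg_left hε (mul_nonneg htpos.le hgap)
  have hcollect : (2 * t * S.w t + t ^ 2 * w' + (S.α - 1 - c) * (S.β t + t * S.β' t)) * S.gap z t
      - c * t * S.w t * S.gap z t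
      = (S.α - 1 - c) * (t * S.b t * S.gap z t)
        - t * S.gap z t * ((S.α - 3) * S.w t - t * w') := by
    simp only [w]
    field_simp
    ring
  rw [(S.hasDerivAt_lyapunov c z ht hw').deriv]
  linarith

-- With `c = α - 1 - ε / 2` both terms of the dissipation get the factor `ε / 2`.
theorem deriv_lyapunov_le_neg_mul_dissipation (hz : ∀ y, Φ z ≤ Φ y) (hε : 0 < ε)
    (hεα : ε < S.α - 1) (ht : t ≥ S.t₀) (hw : 0 ≤ S.w t) (hw' : HasDerivAt S.w w' t)
    (hεw : ε * S.b t ≤ (S.α - 3) * S.w t - t * w') :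
    deriv (S.lyapunov (S.α - 1 - ε / 2) z) t ≤ -(ε / 2 * S.dissipation z t) := by
  refine (S.deriv_lyapunov_le hz (by linarith) (by linarith) ht hw hw' hεw).trans_eq ?_
  rw [dissipation]
  ring

theorem mul_norm_sub_sq_le_lyapunov (hz : ∀ y, Φ z ≤ Φ y) (hcα : c ≤ S.α - 1)
    (ht : t ≥ S.t₀) (hw : 0 ≤ S.w t) :
    c * (S.α - 1 - c) / 2 * ‖S.x t - z‖ ^ 2 ≤ S.lyapunov c z t := by
  have htpos := S.pos_of_ge ht
  have hβ := S.β_nonneg t ht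
  have hgap := S.gap_nonneg hz ht
  have : 0 ≤ S.α - 1 - c := sub_nonneg.2 hcα
  rw [lyapunov]
  exact le_add_of_nonneg_left (by positivity)

end Lyapunov

theorem hasDerivAt_scaledEnergy (z : H) (ht : t ≥ S.t₀) :
    HasDerivAt (S.scaledEnergy z)
      ((1 - S.α) * t * ‖S.v t‖ ^ 2 - t ^ 2 * S.β t * ⟪S.v t, S.G' t⟫
        + (2 * t * S.b t + t ^ 2 * S.b' t) * S.gap z t
        - t ^ 2 * S.b t * (S.lam' t / 2 * ‖S.grad t‖ ^ 2)) t := by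
  have htpos := S.pos_of_ge ht
  have hsq : HasDerivAt (fun s : ℝ => s ^ 2) (2 * t) t := by simpa using hasDerivAt_pow 2 t
  refine (((hsq.mul (S.hasDerivAt_v t ht).norm_sq).const_mul (1 / 2)).add
    ((hsq.mul (S.hasDerivAt_b t ht)).mul (S.hasDerivAt_gap z ht))).congr_deriv ?_
  simp only [S.acc_eq ht, inner_add_right, inner_smul_right, inner_neg_right,
    real_inner_self_eq_norm_sq, Pi.mul_apply]
  rw [real_inner_comm (S.v t) (S.grad t)]
  field_simp
  ring

-- Young's inequality splits the cross term; its `‖∇Φ_λ(x)‖ ^ 2` part combines with the last term of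
-- the derivative of the energy into the perturbation.
theorem neg_inner_sub_le_perturbation (ht : t ≥ S.t₀) :
    -(t ^ 2 * S.β t * ⟪S.v t, S.G' t⟫) - t ^ 2 * S.b t * (S.lam' t / 2 * ‖S.grad t‖ ^ 2)
      ≤ t * ‖S.v t‖ ^ 2 + S.lam t ^ 2 * ‖S.grad t‖ ^ 2 * S.perturbation t := by
  have htpos := S.pos_of_ge ht
  have hlam := S.lam_pos t ht
  have hβ := S.β_nonneg t ht
  set a := t * S.β t * (S.lam' t / S.lam t) * ‖S.grad t‖ with ha
  have hcross : -(t ^ 2 * S.β t * ⟪S.v t, S.G' t⟫) ≤ t * (a * ‖S.v t‖) :=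
    calc -(t ^ 2 * S.β t * ⟪S.v t, S.G' t⟫) = t ^ 2 * S.β t * -⟪S.v t, S.G' t⟫ := by ring
      _ ≤ t ^ 2 * S.β t * (S.lam' t / S.lam t * ‖S.grad t‖ * ‖S.v t‖) := by
        gcongr
        exact S.neg_inner_v_G'_le ht
      _ = t * (a * ‖S.v t‖) := by ring
  have hyoung : a * ‖S.v t‖ ≤ a ^ 2 + ‖S.v t‖ ^ 2 := by
    linarith [two_mul_le_add_sq a ‖S.v t‖, sq_nonneg a, sq_nonneg ‖S.v t‖]
  have hsplit : S.lam t ^ 2 * ‖S.grad t‖ ^ 2 * S.perturbation t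
      = t * a ^ 2 - t ^ 2 * S.b t * (S.lam' t / 2 * ‖S.grad t‖ ^ 2) := by
    rw [ha, perturbation]
    field_simp
  linarith [mul_le_mul_of_nonneg_left hyoung htpos.le]

theorem deriv_scaledEnergy_le {C M : ℝ} (hz : ∀ y, Φ z ≤ Φ y) (hα : 1 ≤ S.α) (hC : 0 ≤ C)
    (ht : t ≥ S.t₀) (hbC : 2 * t * S.b t + t ^ 2 * S.b' t ≤ C * (t * S.b t))
    (hM : ‖S.x t - z‖ ^ 2 ≤ M) :
    deriv (S.scaledEnergy z) t ≤ (C + 1) * S.dissipation z t + M * max (S.perturbation t) 0 := by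
  have htpos := S.pos_of_ge ht
  have hb := S.b_pos t ht
  have hgap := S.gap_nonneg hz ht
  have hgrowth : (2 * t * S.b t + t ^ 2 * S.b' t) * S.gap z t ≤ C * (t * S.b t) * S.gap z t := by
    gcongr
  have hpert : S.lam t ^ 2 * ‖S.grad t‖ ^ 2 * S.perturbation t ≤ M * max (S.perturbation t) 0 :=
    calc S.lam t ^ 2 * ‖S.grad t‖ ^ 2 * S.perturbation t
        ≤ S.lam t ^ 2 * ‖S.grad t‖ ^ 2 * max (S.perturbation t) 0 := by
          gcongr
          exact le_max_left _ _
      _ ≤ M * max (S.perturbation t) 0 := by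
          gcongr
          exact (S.lam_sq_mul_norm_grad_sq_le hz ht).trans hM
  have hfriction : 0 ≤ (S.α - 1) * (t * ‖S.v t‖ ^ 2) :=
    mul_nonneg (sub_nonneg.2 hα) (by positivity)
  have hpotential : 0 ≤ t * S.b t * S.gap z t := by positivity
  have hkinetic : 0 ≤ C * (t * ‖S.v t‖ ^ 2) := by positivity
  rw [(S.hasDerivAt_scaledEnergy z ht).deriv, dissipation]
  linarith [S.neg_inner_sub_le_perturbation ht]

theorem scaledEnergy_nonneg (hz : ∀ y, Φ z ≤ Φ y) (ht : t ≥ S.t₀) : 0 ≤ S.scaledEnergy z t := by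
  have hb := S.b_pos t ht
  have hgap := S.gap_nonneg hz ht
  rw [scaledEnergy]
  positivity

theorem scaledEnergy_le_mul_dissipation (z : H) (t : ℝ) :
    S.scaledEnergy z t ≤ t * S.dissipation z t := by
  have : 0 ≤ t ^ 2 * ‖S.v t‖ ^ 2 := by positivity
  rw [scaledEnergy, dissipation]
  linarith

theorem mul_toReal_sub_le_scaledEnergy (z : H) (ht : t ≥ S.t₀) :
    t ^ 2 * S.b t * ((Φ (S.p t)).toReal - (Φ z).toReal) ≤ S.scaledEnergy z t := by
  have hb := S.b_pos t ht
  refine (mul_le_mul_of_nonneg_left (S.toReal_sub_le_gap z ht) (by positivity)).trans ?_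
  exact le_add_of_nonneg_left (by positivity)

theorem aemeasurable_perturbation :
    AEMeasurable S.perturbation (volume.restrict (Ici S.t₀)) := by
  have haem : ∀ {f f' : ℝ → ℝ}, (∀ t ≥ S.t₀, HasDerivAt f (f' t) t) →
      AEMeasurable f (volume.restrict (Ici S.t₀)) := fun hf =>
    ContinuousOn.aemeasurable (fun t ht => (hf t ht).continuousAt.continuousWithinAt)
      measurableSet_Ici
  have hβ := haem S.hasDerivAt_β
  have hb := haem S.hasDerivAt_b
  have hlam := haem S.hasDerivAt_lam
  have hlam' : AEMeasurable S.lam' (volume.restrict (Ici S.t₀)) := by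
    refine (measurable_deriv S.lam).aemeasurable.congr ?_
    filter_upwards [ae_restrict_mem measurableSet_Ici] with t ht using (S.hasDerivAt_lam t ht).deriv
  unfold perturbation
  fun_prop

theorem integrableOn_max_perturbation
    (h : ∫⁻ t in Ici S.t₀, ENNReal.ofReal (S.perturbation t) < ⊤) :
    IntegrableOn (fun t => max (S.perturbation t) 0) (Ici S.t₀) := by
  refine ⟨(S.aemeasurable_perturbation.max aemeasurable_const).aestronglyMeasurable, ?_⟩
  rw [hasFiniteIntegral_iff_ofReal (f := fun t => max (S.perturbation t) 0)
    (Eventually.of_forall fun t => le_max_right _ _)]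
  simpa only [ENNReal.ofReal_max, ENNReal.ofReal_zero, zero_le, max_eq_left] using h

section Convergence

variable {w' : ℝ → ℝ} {ε C : ℝ}

theorem exists_norm_sub_sq_le (hz : ∀ y, Φ z ≤ Φ y) (hε : 0 < ε) (hεα : ε < S.α - 1)
    (hw : ∀ t ≥ S.t₀, 0 ≤ S.w t) (hw' : ∀ t ≥ S.t₀, HasDerivAt S.w (w' t) t)
    (hεw : ∀ t ≥ S.t₀, ε * S.b t ≤ (S.α - 3) * S.w t - t * w' t) :
    ∃ M, ∀ t ≥ S.t₀, ‖S.x t - z‖ ^ 2 ≤ M := by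
  set c := S.α - 1 - ε / 2 with hc
  have hdecr : AntitoneOn (S.lyapunov c z) (Ici S.t₀) := by
    have hdiff : ∀ t ≥ S.t₀, DifferentiableAt ℝ (S.lyapunov c z) t := fun t ht =>
      (S.hasDerivAt_lyapunov c z ht (hw' t ht)).differentiableAt
    refine antitoneOn_of_deriv_nonpos (convex_Ici _)
      (fun t ht => (hdiff t ht).continuousAt.continuousWithinAt)
      (fun t ht => (hdiff t (interior_subset ht)).differentiableWithinAt) fun t ht => ?_
    have ht' : t ≥ S.t₀ := interior_subset ht
    exact (S.deriv_lyapunov_le_neg_mul_dissipation hz hε hεα ht' (hw t ht') (hw' t ht')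
      (hεw t ht')).trans
      (neg_nonpos.2 (mul_nonneg (half_pos hε).le (S.dissipation_nonneg hz ht')))
  have hcoeff : 0 < c * (S.α - 1 - c) / 2 :=
    half_pos (mul_pos (by linarith) (by linarith))
  refine ⟨S.lyapunov c z S.t₀ / (c * (S.α - 1 - c) / 2), fun t ht => (le_div_iff₀' hcoeff).2 ?_⟩
  exact (S.mul_norm_sub_sq_le_lyapunov hz (by linarith) ht (hw t ht)).trans
    (hdecr self_mem_Ici ht ht)

theorem tendsto_scaledEnergy (hz : ∀ y, Φ z ≤ Φ y) (hε : 0 < ε) (hεα : ε < S.α - 1) (hC : 0 ≤ C)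
    (hw : ∀ t ≥ S.t₀, 0 ≤ S.w t) (hw' : ∀ t ≥ S.t₀, HasDerivAt S.w (w' t) t)
    (hεw : ∀ t ≥ S.t₀, ε * S.b t ≤ (S.α - 3) * S.w t - t * w' t)
    (hpert : ∫⁻ t in Ici S.t₀, ENNReal.ofReal (S.perturbation t) < ⊤)
    (hbC : ∀ t ≥ S.t₀, 2 * t * S.b t + t ^ 2 * S.b' t ≤ C * (t * S.b t)) :
    Tendsto (S.scaledEnergy z) atTop (𝓝 0) := by
  obtain ⟨M, hM⟩ := S.exists_norm_sub_sq_le hz hε hεα hw hw' hεw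
  set c := S.α - 1 - ε / 2 with hc
  have hlyapunov : ∀ t ≥ S.t₀, 0 ≤ S.lyapunov c z t := fun t ht =>
    have hcoeff : 0 ≤ c * (S.α - 1 - c) / 2 :=
      div_nonneg (mul_nonneg (by linarith) (by linarith)) zero_le_two
    (mul_nonneg hcoeff (sq_nonneg _)).trans
      (S.mul_norm_sub_sq_le_lyapunov hz (by linarith) ht (hw t ht))
  exact tendsto_zero_of_deriv_le_of_le_mul S.t₀_pos (half_pos hε) (by linarith : 0 ≤ C + 1)
    hlyapunov (fun t ht => (S.hasDerivAt_lyapunov c z ht (hw' t ht)).differentiableAt)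
    (fun t ht => S.deriv_lyapunov_le_neg_mul_dissipation hz hε hεα ht (hw t ht) (hw' t ht)
      (hεw t ht))
    (fun t ht => S.scaledEnergy_nonneg hz ht)
    (fun t ht => (S.hasDerivAt_scaledEnergy z ht).differentiableAt)
    (fun t _ => S.scaledEnergy_le_mul_dissipation z t)
    (fun t ht => S.deriv_scaledEnergy_le hz (by linarith) hC ht (hbC t ht) (hM t ht))
    ((S.integrableOn_max_perturbation hpert).const_mul M)

end Convergence

end InertialMoreauFlow

theorem objective_values_little_o_general {H : Type*} [NormedAddCommGroup H]
    [InnerProductSpace ℝ H] {Φ : H → EReal} (S : InertialMoreauFlow Φ) {w' : ℝ → ℝ} {z : H}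
    (hz : ∀ y, Φ z ≤ Φ y) (hw : ∀ t ≥ S.t₀, S.β' t + S.β t / t ≤ S.b t)
    (hw' : ∀ t ≥ S.t₀, HasDerivAt S.w (w' t) t)
    (hεw : ∃ ε, 0 < ε ∧ ε < S.α - 1 ∧
      ∀ t ≥ S.t₀, ε * S.b t ≤ (S.α - 3) * S.w t - t * w' t)
    (hpert : ∫⁻ t in Ici S.t₀, ENNReal.ofReal (S.perturbation t) < ⊤)
    (hbC : ∃ C > 0, ∀ t ≥ S.t₀, 2 * t * S.b t + t ^ 2 * S.b' t ≤ C * (t * S.b t)) :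
    Tendsto (fun t => t ^ 2 * S.b t * ((Φ (S.p t)).toReal - (Φ z).toReal)) atTop (𝓝 0) := by
  obtain ⟨ε, hε, hεα, hεw⟩ := hεw
  obtain ⟨C, hC, hbC⟩ := hbC
  have hw₀ : ∀ t ≥ S.t₀, 0 ≤ S.w t := fun t ht => by
    rw [InertialMoreauFlow.w, sub_sub]
    exact sub_nonneg.2 (hw t ht)
  refine squeeze_zero' ?_ ?_ (S.tendsto_scaledEnergy hz hε hεα hC.le hw₀ hw' hεw hpert hbC)
  · filter_upwards [eventually_ge_atTop S.t₀] with t ht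
    exact mul_nonneg (mul_nonneg (sq_nonneg t) (S.b_pos t ht).le) (S.toReal_sub_nonneg hz ht)
  · filter_upwards [eventually_ge_atTop S.t₀] with t ht
    exact S.mul_toReal_sub_le_scaledEnergy z ht

theorem objective_values_little_o
    {H : Type*} [NormedAddCommGroup H] [InnerProductSpace ℝ H] [CompleteSpace H]
    (Φ : H → EReal)
    (hΦbot : ∀ y, Φ y ≠ ⊥) (hΦproper : ∃ y, Φ y ≠ ⊤)
    (hΦconv : EConvexOn Φ) (hΦlsc : LowerSemicontinuous Φ)
    (t₀ α : ℝ) (ht₀ : 0 < t₀)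
    (β b lam β' b' lam' w' : ℝ → ℝ)
    (hβnonneg : ∀ t ≥ t₀, 0 ≤ β t)
    (hbpos : ∀ t ≥ t₀, 0 < b t)
    (hlampos : ∀ t ≥ t₀, 0 < lam t)
    (hβ' : ∀ t ≥ t₀, HasDerivAt β (β' t) t)
    (hb' : ∀ t ≥ t₀, HasDerivAt b (b' t) t)
    (hlam' : ∀ t ≥ t₀, HasDerivAt lam (lam' t) t)
    (hw' : ∀ t ≥ t₀, HasDerivAt (fun s => b s - β' s - β s / s) (w' t) t)
    (x v acc p G' : ℝ → H)
    (hx : ∀ t ≥ t₀, HasDerivAt x (v t) t)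
    (hv : ∀ t ≥ t₀, HasDerivAt v (acc t) t)
    (hp : ∀ t ≥ t₀, IsProxPt Φ (lam t) (x t) (p t))
    (hG' : ∀ t ≥ t₀, HasDerivAt (fun s => (lam s)⁻¹ • (x s - p s)) (G' t) t)
    (hode : ∀ t ≥ t₀, acc t + (α / t) • v t + β t • G' t
        + b t • ((lam t)⁻¹ • (x t - p t)) = 0)
    (hα : 1 < α)
    (hlammono : MonotoneOn lam (Set.Ici t₀))
    (hβmono : MonotoneOn β (Set.Ici t₀))
    (hw : ∀ t ≥ t₀, β' t + β t / t < b t)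
    (hAs2 : ∃ ε, 0 < ε ∧ ε < α - 1 ∧
      ∀ t ≥ t₀, ε * b t ≤ (α - 3) * (b t - β' t - β t / t) - t * w' t)
    (hAs4 : ∫⁻ t in Set.Ici t₀, ENNReal.ofReal ((lam' t) ^ 2 * t ^ 3 * (β t) ^ 2 / (lam t) ^ 4
      - lam' t * t ^ 2 * b t / (2 * (lam t) ^ 2)) < ⊤)
    (hAs : ∃ C > (0 : ℝ), ∀ t ≥ t₀, 2 * t * b t + t ^ 2 * b' t ≤ C * (t * b t))
    (z : H) (hz : ∀ y, Φ z ≤ Φ y)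
    :
    Filter.Tendsto (fun t => t ^ 2 * b t * ((Φ (p t)).toReal - (Φ z).toReal))
      Filter.atTop (nhds 0) :=
  objective_values_little_o_general
    ⟨t₀, α, β, b, lam, β', b', lam', x, v, acc, p, G', hΦbot, hΦproper, hΦconv, ht₀, hβnonneg,
      hbpos, hlampos, hlammono, hβ', hb', hlam', hx, hv, hp, hG', hode⟩
    hz (fun t ht => (hw t ht).le) hw' hAs2 hAs4 hAs
end
end

section
/- Assume α > 1, both λ and β are nondecreasing on [t₀,∞), b(t) > β'(t) + β(t)/t (equivalently w(t) > 0) for every t ≥ t₀, there exists ε ∈ (0, α−1) with (α−3)·w(t) − t·w'(t) ≥ ε·b(t) for every t ≥ t₀, ∫_{t₀}^{∞} [ λ'(t)²·t³·β(t)²/λ(t)⁴ − λ'(t)·t²·b(t)/(2·λ(t)²) ]_+ dt < +∞ (where [·]_+ denotes the positive part), and there exists C > 0 with (d/dt)(t²·b(t)) ≤ C·t·b(t) for every t ≥ t₀. Then (t·√(b(t))/√(λ(t)))·‖prox_{λ(t)Φ}(x(t)) − x(t)‖ → 0 as t → +∞, i.e. ‖prox_{λ(t)Φ}(x(t)) −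 x(t)‖ = o(√(λ(t))/(t·√(b(t)))). -/
open Set MeasureTheory Filter Real

noncomputable section

/-! Optimality of the proximal point makes `∇Φ_λ(x)` a subgradient of `Φ` at `prox x`. Two
consequences along the trajectory replace smoothness of `Φ`: the envelope gap `Φ_λ(x) - Φ*` has
derivative `⟪∇Φ_λ(x), ẋ⟫ - λ' ‖∇Φ_λ(x)‖² / 2`, and `d/dt ∇Φ_λ(x)` has nonnegative inner product
with the derivative of `prox x`.

A Lyapunov function combining the gap, a point anchored at a minimizer and the distance to it is
nonincreasing. Hence the trajectory is bounded, so `λ ‖∇Φ_λ(x)‖` is too, and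
`t (b (Φ_λ(x) - Φ*) + ‖ẋ‖²)` is integrable. The derivative of the mechanical energy
`t² (b (Φ_λ(x) - Φ*) + ‖ẋ‖² / 2)` is then at most an integrable function, the term involving
`d/dt ∇Φ_λ(x)` being absorbed by Young's inequality and the integrability assumption on `λ'`. The
mechanical energy therefore converges; divided by `t` it is integrable, so its limit is `0`. It
dominates half the square of `t √b / √λ ‖prox x - x‖`. -/

open scoped InnerProductSpace Topology

section ProximalPoint

variable {H : Type*} [NormedAddCommGroup H] [InnerProductSpace ℝ H]
  {Φ : H → EReal} {l : ℝ} {x p y : H}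

lemma IsProxPt.ne_top_s13 (hp : IsProxPt Φ l x p) (hy : Φ y ≠ ⊤) : Φ p ≠ ⊤ := by
  intro hpt
  have hle := hp y
  rw [hpt, EReal.top_add_coe, top_le_iff] at hle
  exact (EReal.add_lt_top hy (EReal.coe_ne_top _)).ne hle

lemma IsProxPt.toReal_add_inner_le_add_mul_s13 (hp : IsProxPt Φ l x p) (hl : 0 < l)
    (hbot : ∀ y, Φ y ≠ ⊥) (hconv : EConvexOn Φ) (hy : Φ y ≠ ⊤)
    {a : ℝ} (ha : 0 < a) (ha1 : a ≤ 1) :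
    (Φ p).toReal + ⟪l⁻¹ • (x - p), y - p⟫_ℝ
      ≤ (Φ y).toReal + a * (‖y - p‖ ^ 2 / (2 * l)) := by
  have hcomb := (hp ((1 - a) • p + a • y)).trans
    (add_le_add_left (hconv p y (1 - a) a (by linarith) ha.le (by ring)) _)
  rw [← EReal.coe_toReal (hp.ne_top_s13 hy) (hbot p), ← EReal.coe_toReal hy (hbot y)] at hcomb
  have hreal : (Φ p).toReal + ‖x - p‖ ^ 2 / (2 * l) ≤ (1 - a) * (Φ p).toReal + a * (Φ y).toReal
      + ‖x - ((1 - a) • p + a • y)‖ ^ 2 / (2 * l) := by exact_mod_cast hcomb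
  have hexpand : ‖x - ((1 - a) • p + a • y)‖ ^ 2 / (2 * l)
      = ‖x - p‖ ^ 2 / (2 * l) - a * ⟪l⁻¹ • (x - p), y - p⟫_ℝ
        + a * (a * (‖y - p‖ ^ 2 / (2 * l))) := by
    rw [show x - ((1 - a) • p + a • y) = (x - p) - a • (y - p) by module, norm_sub_sq_real,
      inner_smul_right, real_inner_smul_left, norm_smul, Real.norm_of_nonneg ha.le]
    field_simp
  rw [hexpand] at hreal
  exact le_of_mul_le_mul_left (by linarith) ha

lemma IsProxPt.toReal_add_inner_le (hp : IsProxPt Φ l x p) (hl : 0 < l)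
    (hbot : ∀ y, Φ y ≠ ⊥) (hconv : EConvexOn Φ) (hy : Φ y ≠ ⊤) :
    (Φ p).toReal + ⟪l⁻¹ • (x - p), y - p⟫_ℝ ≤ (Φ y).toReal := by
  have hlim : Tendsto (fun a : ℝ => (Φ y).toReal + a * (‖y - p‖ ^ 2 / (2 * l)))
      (𝓝[>] 0) (𝓝 (Φ y).toReal) :=
    tendsto_nhdsWithin_of_tendsto_nhds (Continuous.tendsto' (by fun_prop) _ _ (by simp))
  refine ge_of_tendsto hlim ?_
  filter_upwards [Ioc_mem_nhdsGT (zero_lt_one' ℝ)] with a ha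
  exact hp.toReal_add_inner_le_add_mul_s13 hl hbot hconv hy ha.1 ha.2

end ProximalPoint

section SubgradientAlong

variable {H : Type*} [NormedAddCommGroup H] [InnerProductSpace ℝ H]

/-- `G s` is a subgradient at `p s` of a function with values `f s = F (p s)`, for `s ∈ S`. The
function `F` does not appear: its subgradient inequality is only tested at points of the family. -/
def IsSubgradientAlong {ι : Type*} (f : ι → ℝ) (G p : ι → H) (S : Set ι) : Prop :=
  ∀ s ∈ S, ∀ u ∈ S, f s + ⟪G s, p u - p s⟫_ℝ ≤ f u

namespace IsSubgradientAlong

section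

variable {ι : Type*} {f : ι → ℝ} {G p : ι → H} {S : Set ι} {s u : ι}

lemma sub_sub_inner_le (h : IsSubgradientAlong f G p S) (hs : s ∈ S) (hu : u ∈ S) :
    f u - f s - ⟪G s, p u - p s⟫_ℝ ≤ ⟪G u - G s, p u - p s⟫_ℝ := by
  have hback := h u hu s hs
  rw [← neg_sub (p u), inner_neg_right] at hback
  rw [inner_sub_left]
  linarith

lemma inner_sub_sub_nonneg (h : IsSubgradientAlong f G p S) (hs : s ∈ S) (hu : u ∈ S) :
    0 ≤ ⟪G u - G s, p u - p s⟫_ℝ := by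
  linarith [h s hs u hu, h.sub_sub_inner_le hs hu]

end

variable {f : ℝ → ℝ} {G p : ℝ → H} {S : Set ℝ} {s : ℝ} {p' G' : H}

lemma hasDerivAt (h : IsSubgradientAlong f G p S) (hS : S ∈ 𝓝 s) (hG : ContinuousAt G s)
    (hp : HasDerivAt p p' s) : HasDerivAt f ⟪G s, p'⟫_ℝ s := by
  have hGo : (fun u => G u - G s) =o[𝓝 s] fun _ => (1 : ℝ) :=
    (Asymptotics.isLittleO_one_iff ℝ).2 (tendsto_sub_nhds_zero_iff.2 hG)
  have hprod : (fun u => ‖G u - G s‖ * ‖p u - p s‖) =o[𝓝 s] fun u => u - s := by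
    simpa only [one_mul] using hGo.norm_left.mul_isBigO hp.isBigO_sub.norm_left
  have hrem : (fun u => f u - f s - ⟪G s, p u - p s⟫_ℝ) =o[𝓝 s] fun u => u - s := by
    refine (Asymptotics.IsBigO.of_bound' ?_).trans_isLittleO hprod
    filter_upwards [hS] with u hu
    have hs := mem_of_mem_nhds hS
    rw [Real.norm_of_nonneg (by linarith [h s hs u hu]), Real.norm_of_nonneg (by positivity)]
    exact (h.sub_sub_inner_le hs hu).trans (real_inner_le_norm _ _)
  have hlin : HasDerivAt (fun u => ⟪G s, p u - p s⟫_ℝ) ⟪G s, p'⟫_ℝ s := by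
    simpa using (hasDerivAt_const s (G s)).inner ℝ (hp.sub_const (p s))
  rw [hasDerivAt_iff_isLittleO] at hlin ⊢
  refine (hrem.add hlin).congr_left fun u => ?_
  simp only [sub_self, inner_zero_right]
  ring

lemma inner_deriv_nonneg (h : IsSubgradientAlong f G p S) (hS : S ∈ 𝓝 s)
    (hG : HasDerivAt G G' s) (hp : HasDerivAt p p' s) : 0 ≤ ⟪G', p'⟫_ℝ := by
  refine ge_of_tendsto (hG.tendsto_slope.inner (𝕜 := ℝ) hp.tendsto_slope) ?_
  filter_upwards [nhdsWithin_le_nhds hS] with u hu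
  simp only [slope_def_module, real_inner_smul_left, inner_smul_right, ← mul_assoc]
  exact mul_nonneg (mul_self_nonneg _) (h.inner_sub_sub_nonneg (mem_of_mem_nhds hS) hu)

end IsSubgradientAlong

lemma neg_norm_mul_norm_le_mul_inner {g v u : H} {l : ℝ} (hl : 0 ≤ l)
    (h : 0 ≤ ⟪g, v - (l • g + u)⟫_ℝ) : -(‖u‖ * ‖v‖) ≤ l * ⟪g, v⟫_ℝ := by
  rcases le_total (l * ‖g‖) ‖u‖ with hgu | hug
  · calc -(‖u‖ * ‖v‖) ≤ l * -(‖g‖ * ‖v‖) := by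
          linarith [mul_le_mul_of_nonneg_right hgu (norm_nonneg v)]
      _ ≤ l * ⟪g, v⟫_ℝ := by
          gcongr
          exact neg_le_of_abs_le (abs_real_inner_le_norm g v)
  · have hgv : 0 ≤ ⟪g, v⟫_ℝ := calc
      0 ≤ ‖g‖ * (l * ‖g‖ - ‖u‖) := mul_nonneg (norm_nonneg g) (sub_nonneg.2 hug)
      _ ≤ l * ‖g‖ ^ 2 + ⟪g, u⟫_ℝ := by
          linarith [neg_le_of_abs_le (abs_real_inner_le_norm g u)]
      _ ≤ ⟪g, v⟫_ℝ := by
          rw [inner_sub_right, inner_add_right, inner_smul_right, real_inner_self_eq_norm_sq] at h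
          linarith
    exact (neg_nonpos.2 (by positivity)).trans (mul_nonneg hl hgv)

end SubgradientAlong

section RealAnalysis

lemma exists_tendsto_of_antitoneOn_Ici {f : ℝ → ℝ} {a c : ℝ} (hf : AntitoneOn f (Ici a))
    (hc : ∀ t ≥ a, c ≤ f t) : ∃ l, Tendsto f atTop (𝓝 l) := by
  have hanti : Antitone fun t => f (max a t) := fun s t hst =>
    hf (le_max_left a s) (le_max_left a t) (max_le_max_left a hst)
  have hbdd : BddBelow (range fun t => f (max a t)) :=
    ⟨c, forall_mem_range.2 fun t => hc _ (le_max_left a t)⟩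
  refine ⟨_, (tendsto_atTop_ciInf hanti hbdd).congr' ?_⟩
  filter_upwards [eventually_ge_atTop a] with t ht
  rw [max_eq_right ht]

lemma antitoneOn_sub_integral_of_deriv_le {f f' k : ℝ → ℝ} {a : ℝ}
    (hf : ∀ t ≥ a, HasDerivAt f (f' t) t) (hfk : ∀ t ≥ a, f' t ≤ k t)
    (hk : IntegrableOn k (Ioi a)) : AntitoneOn (fun t => f t - ∫ s in a..t, k s) (Ici a) := by
  intro s (hs : a ≤ s) t (ht : a ≤ t) hst
  have hkint : ∀ r ≥ a, IntervalIntegrable k volume a r := fun r hr =>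
    (intervalIntegrable_iff_integrableOn_Ioc_of_le hr).2 (hk.mono_set Ioc_subset_Ioi_self)
  have hincr : f t - f s ≤ ∫ r in s..t, k r := by
    refine intervalIntegral.sub_le_integral_of_hasDeriv_right_of_le hst
      (fun r hr => (hf r (hs.trans hr.1)).continuousAt.continuousWithinAt)
      (fun r hr => (hf r (hs.trans hr.1.le)).hasDerivWithinAt) ?_
      (fun r hr => hfk r (hs.trans hr.1.le))
    rw [integrableOn_Icc_iff_integrableOn_Ioc]
    exact hk.mono_set (Ioc_subset_Ioi_self.trans (Ioi_subset_Ioi hs))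
  have hsplit := intervalIntegral.integral_interval_sub_left (hkint t ht) (hkint s hs)
  dsimp only
  linarith

lemma exists_tendsto_of_deriv_le {f f' k : ℝ → ℝ} {a c : ℝ}
    (hf : ∀ t ≥ a, HasDerivAt f (f' t) t) (hfk : ∀ t ≥ a, f' t ≤ k t)
    (hk : IntegrableOn k (Ioi a)) (hc : ∀ t ≥ a, c ≤ f t) : ∃ l, Tendsto f atTop (𝓝 l) := by
  have hbound : ∀ t ≥ a, c - ∫ s in Ioi a, ‖k s‖ ≤ f t - ∫ s in a..t, k s := by
    intro t ht
    refine sub_le_sub (hc t ht) ?_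
    calc ∫ s in a..t, k s ≤ ∫ s in Ioc a t, ‖k s‖ := by
          rw [← intervalIntegral.integral_of_le ht]
          exact (le_norm_self _).trans (intervalIntegral.norm_integral_le_integral_norm ht)
      _ ≤ ∫ s in Ioi a, ‖k s‖ := setIntegral_mono_set hk.norm
          (Eventually.of_forall fun s => norm_nonneg _) Ioc_subset_Ioi_self.eventuallyLE
  obtain ⟨l, hl⟩ :=
    exists_tendsto_of_antitoneOn_Ici (antitoneOn_sub_integral_of_deriv_le hf hfk hk) hbound
  refine ⟨_, (hl.add (intervalIntegral_tendsto_integral_Ioi a hk tendsto_id)).congr fun t => ?_⟩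
  exact sub_add_cancel _ _

lemma integrableOn_Ioi_of_deriv_le_neg {f f' h : ℝ → ℝ} {a c : ℝ}
    (hf : ∀ t ≥ a, HasDerivAt f (f' t) t) (hfh : ∀ t ≥ a, f' t ≤ -h t) (hh : ∀ t ≥ a, 0 ≤ h t)
    (hmeas : AEStronglyMeasurable h (volume.restrict (Ioi a))) (hc : ∀ t ≥ a, c ≤ f t) :
    IntegrableOn h (Ioi a) := by
  have hf'0 : ∀ t ≥ a, f' t ≤ 0 := fun t ht => (hfh t ht).trans (neg_nonpos.2 (hh t ht))
  obtain ⟨l, hl⟩ := exists_tendsto_of_deriv_le hf hf'0 integrableOn_zero hc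
  have hf'int : IntegrableOn f' (Ioi a) :=
    integrableOn_Ioi_deriv_of_nonpos' hf (fun t ht => hf'0 t ht.out.le) hl
  refine hf'int.neg.mono' hmeas ?_
  filter_upwards [ae_restrict_mem measurableSet_Ioi] with t ht
  rw [Real.norm_of_nonneg (hh t ht.out.le), Pi.neg_apply]
  linarith [hfh t ht.out.le]

-- A nonzero limit would make `1 / t` integrable at infinity.
lemma eq_zero_of_tendsto_of_integrableOn_div {f : ℝ → ℝ} {a l : ℝ}
    (hl : Tendsto f atTop (𝓝 l)) (hint : IntegrableOn (fun t => f t / t) (Ioi a)) : l = 0 := by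
  by_contra hl0
  have hone : (fun _ : ℝ => (1 : ℝ)) =O[atTop] f :=
    (Asymptotics.isBigO_const_const 1 hl0 atTop).trans
      (Asymptotics.isEquivalent_const_iff_tendsto hl0 |>.2 hl).isBigO_symm
  have hinv : (fun t : ℝ => t⁻¹) =O[atTop] fun t => f t / t := by
    simpa only [one_mul, div_eq_mul_inv] using
      hone.mul (Asymptotics.isBigO_refl (fun t : ℝ => t⁻¹) atTop)
  obtain ⟨s, hs, hsint⟩ := hinv.integrableAtFilter
    measurable_inv.aestronglyMeasurable.stronglyMeasurableAtFilter ⟨_, Ioi_mem_atTop a, hint⟩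
  obtain ⟨r, hr⟩ := mem_atTop_sets.1 hs
  exact not_integrableOn_Ioi_inv (hsint.mono_set fun t (ht : r < t) => hr t ht.le)

lemma tendsto_zero_of_deriv_le_of_integrableOn_div {f f' k : ℝ → ℝ} {a : ℝ}
    (hf : ∀ t ≥ a, HasDerivAt f (f' t) t) (hfk : ∀ t ≥ a, f' t ≤ k t)
    (hk : IntegrableOn k (Ioi a)) (hf0 : ∀ t ≥ a, 0 ≤ f t)
    (hint : IntegrableOn (fun t => f t / t) (Ioi a)) : Tendsto f atTop (𝓝 0) := by
  obtain ⟨l, hl⟩ := exists_tendsto_of_deriv_le hf hfk hk hf0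
  rwa [eq_zero_of_tendsto_of_integrableOn_div hl hint] at hl

lemma integrable_max_zero_of_lintegral_ofReal_lt_top {Ω : Type*} [MeasurableSpace Ω]
    {μ : Measure Ω} {f : Ω → ℝ} (hf : AEMeasurable f μ)
    (hint : ∫⁻ t, ENNReal.ofReal (f t) ∂μ < ⊤) : Integrable (fun t => max (f t) 0) μ := by
  have hmeas : AEStronglyMeasurable (fun t => max (f t) 0) μ :=
    (hf.max aemeasurable_const).aestronglyMeasurable
  have hnonneg : 0 ≤ᵐ[μ] fun t => max (f t) 0 := Eventually.of_forall fun t => le_max_right _ _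
  rw [← lintegral_ofReal_ne_top_iff_integrable hmeas hnonneg]
  simpa [ENNReal.ofReal_max] using hint.ne

lemma aemeasurable_restrict_of_hasDerivAt {f f' : ℝ → ℝ} {S : Set ℝ} (hS : MeasurableSet S)
    (hf : ∀ t ∈ S, HasDerivAt f (f' t) t) : AEMeasurable f (volume.restrict S) :=
  ContinuousOn.aemeasurable (fun t ht => (hf t ht).continuousAt.continuousWithinAt) hS

lemma aemeasurable_deriv_restrict_of_hasDerivAt {f f' : ℝ → ℝ} {S : Set ℝ} (hS : MeasurableSet S)
    (hf : ∀ t ∈ S, HasDerivAt f (f' t) t) : AEMeasurable f' (volume.restrict S) := by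
  refine ⟨deriv f, measurable_deriv f, ?_⟩
  filter_upwards [ae_restrict_mem hS] with t ht
  exact (hf t ht).deriv.symm

end RealAnalysis

section ProxFlow

variable {H : Type*} [NormedAddCommGroup H] [InnerProductSpace ℝ H]

/-- A solution `x`, with velocity `v` and acceleration `acc`, of the inertial dynamics
`ẍ + (α / t) ẋ + β (d/dt) ∇Φ_lam(x) + b ∇Φ_lam(x) = 0`, together with the standing assumptions on
`Φ` and on the coefficients. Primed fields are derivatives: `G'` is that of `∇Φ_lam(x)`, written
through the proximal points `p` as `(x - p) / lam`, and `w'` that of `b - β' - β / t`. The point `z`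
is a minimizer of `Φ`. -/
structure ProxFlow (Φ : H → EReal) where
  t₀ : ℝ
  α : ℝ
  (β b lam β' b' lam' w' : ℝ → ℝ)
  (x v acc p G' : ℝ → H)
  z : H
  t₀_pos : 0 < t₀
  ne_bot : ∀ y, Φ y ≠ ⊥
  convex : EConvexOn Φ
  z_ne_top : Φ z ≠ ⊤
  z_le : ∀ y, Φ z ≤ Φ y
  β_nonneg : ∀ t ≥ t₀, 0 ≤ β t
  b_nonneg : ∀ t ≥ t₀, 0 ≤ b t
  lam_pos : ∀ t ≥ t₀, 0 < lam t
  monotoneOn_lam : MonotoneOn lam (Ici t₀)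
  le_b : ∀ t ≥ t₀, β' t + β t / t ≤ b t
  hasDerivAt_β : ∀ t ≥ t₀, HasDerivAt β (β' t) t
  hasDerivAt_b : ∀ t ≥ t₀, HasDerivAt b (b' t) t
  hasDerivAt_lam : ∀ t ≥ t₀, HasDerivAt lam (lam' t) t
  hasDerivAt_w : ∀ t ≥ t₀, HasDerivAt (fun s => b s - β' s - β s / s) (w' t) t
  hasDerivAt_x : ∀ t ≥ t₀, HasDerivAt x (v t) t
  hasDerivAt_v : ∀ t ≥ t₀, HasDerivAt v (acc t) t
  hasDerivAt_grad : ∀ t ≥ t₀, HasDerivAt (fun s => (lam s)⁻¹ • (x s - p s)) (G' t) t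
  isProxPt : ∀ t ≥ t₀, IsProxPt Φ (lam t) (x t) (p t)
  ode : ∀ t ≥ t₀, acc t + (α / t) • v t + β t • G' t + b t • ((lam t)⁻¹ • (x t - p t)) = 0

namespace ProxFlow

variable {Φ : H → EReal} (S : ProxFlow Φ) {t δ T C M : ℝ}

/-- The gradient `∇Φ_lam(x)` of the Moreau envelope along the trajectory. -/
def grad (t : ℝ) : H := (S.lam t)⁻¹ • (S.x t - S.p t)

/-- `Φ (p t) - min Φ`, which is finite because `p t` is a proximal point. -/
def gap (t : ℝ) : ℝ := (Φ (S.p t)).toReal - (Φ S.z).toReal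

/-- `Φ_lam(x) - min Φ`, using that the infimum defining the Moreau envelope is attained at the
proximal point. -/
def envGap (t : ℝ) : ℝ := S.gap t + S.lam t / 2 * ‖S.grad t‖ ^ 2

/-- The coefficient `w = b - β' - β / t`. -/
def w (t : ℝ) : ℝ := S.b t - S.β' t - S.β t / t

lemma w_nonneg (ht : S.t₀ ≤ t) : 0 ≤ S.w t := by
  have := S.le_b t ht
  unfold w
  linarith

lemma lam'_nonneg (ht : S.t₀ ≤ t) : 0 ≤ S.lam' t := by
  rw [← (S.hasDerivAt_lam t ht).hasDerivWithinAt.derivWithin (uniqueDiffOn_Ici S.t₀ t ht)]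
  exact S.monotoneOn_lam.derivWithin_nonneg

lemma p_eq (ht : S.t₀ ≤ t) : S.p t = S.x t - S.lam t • S.grad t := by
  rw [grad, smul_inv_smul₀ (S.lam_pos t ht).ne', sub_sub_cancel]

lemma p_ne_top (ht : S.t₀ ≤ t) : Φ (S.p t) ≠ ⊤ := (S.isProxPt t ht).ne_top_s13 S.z_ne_top

lemma gap_nonneg (ht : S.t₀ ≤ t) : 0 ≤ S.gap t :=
  sub_nonneg.2 (EReal.toReal_le_toReal (S.z_le _) (S.ne_bot _) (S.p_ne_top ht))

lemma envGap_nonneg (ht : S.t₀ ≤ t) : 0 ≤ S.envGap t := by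
  have := S.lam_pos t ht
  exact add_nonneg (S.gap_nonneg ht) (by positivity)

lemma isSubgradientAlong : IsSubgradientAlong S.gap S.grad S.p (Ici S.t₀) := by
  intro s hs u hu
  have := (S.isProxPt s hs).toReal_add_inner_le (S.lam_pos s hs) S.ne_bot S.convex (S.p_ne_top hu)
  unfold gap grad
  linarith

lemma gap_add_le_inner_grad (ht : S.t₀ ≤ t) :
    S.gap t + S.lam t * ‖S.grad t‖ ^ 2 ≤ ⟪S.grad t, S.x t - S.z⟫_ℝ := by
  have hsub : (Φ (S.p t)).toReal + ⟪S.grad t, S.z - S.p t⟫_ℝ ≤ (Φ S.z).toReal :=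
    (S.isProxPt t ht).toReal_add_inner_le (S.lam_pos t ht) S.ne_bot S.convex S.z_ne_top
  have hsplit : S.x t - S.z = S.lam t • S.grad t - (S.z - S.p t) := by rw [S.p_eq ht]; abel
  rw [hsplit, inner_sub_right, inner_smul_right, real_inner_self_eq_norm_sq, gap]
  linarith

lemma envGap_le_inner_grad (ht : S.t₀ ≤ t) : S.envGap t ≤ ⟪S.grad t, S.x t - S.z⟫_ℝ := by
  have hnonneg : 0 ≤ S.lam t * ‖S.grad t‖ ^ 2 := by have := S.lam_pos t ht; positivity
  have := S.gap_add_le_inner_grad ht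
  unfold envGap
  linarith

lemma lam_mul_norm_grad_le (ht : S.t₀ ≤ t) : S.lam t * ‖S.grad t‖ ≤ ‖S.x t - S.z‖ := by
  have hmul : (S.lam t * ‖S.grad t‖) * ‖S.grad t‖ ≤ ‖S.x t - S.z‖ * ‖S.grad t‖ := by
    linarith [S.gap_add_le_inner_grad ht, S.gap_nonneg ht,
      real_inner_le_norm (S.grad t) (S.x t - S.z)]
  rcases (norm_nonneg (S.grad t)).eq_or_lt with hzero | hpos
  · rw [← hzero, mul_zero]
    exact norm_nonneg _
  · exact le_of_mul_le_mul_right hmul hpos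

lemma hasDerivAt_p (ht : S.t₀ < t) :
    HasDerivAt S.p (S.v t - (S.lam t • S.G' t + S.lam' t • S.grad t)) t := by
  refine ((S.hasDerivAt_x t ht.le).sub
    ((S.hasDerivAt_lam t ht.le).smul (S.hasDerivAt_grad t ht.le))).congr_of_eventuallyEq ?_
  filter_upwards [Ioi_mem_nhds ht] with u hu
  exact S.p_eq hu.out.le

lemma hasDerivAt_envGap (ht : S.t₀ < t) :
    HasDerivAt S.envGap (⟪S.grad t, S.v t⟫_ℝ - S.lam' t / 2 * ‖S.grad t‖ ^ 2) t := by
  have hgrad : HasDerivAt S.grad (S.G' t) t := S.hasDerivAt_grad t ht.le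
  have hgap := S.isSubgradientAlong.hasDerivAt (Ici_mem_nhds ht) hgrad.continuousAt
    (S.hasDerivAt_p ht)
  refine (hgap.add (((S.hasDerivAt_lam t ht.le).div_const 2).mul hgrad.norm_sq)).congr_deriv ?_
  simp only [inner_sub_right, inner_add_right, inner_smul_right, real_inner_self_eq_norm_sq]
  ring

lemma neg_le_mul_inner_G'_v (ht : S.t₀ < t) :
    -(S.lam' t * ‖S.grad t‖ * ‖S.v t‖) ≤ S.lam t * ⟪S.G' t, S.v t⟫_ℝ := by
  have hmono := S.isSubgradientAlong.inner_deriv_nonneg (Ici_mem_nhds ht)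
    (S.hasDerivAt_grad t ht.le) (S.hasDerivAt_p ht)
  have := neg_norm_mul_norm_le_mul_inner (S.lam_pos t ht.le).le hmono
  rwa [norm_smul, Real.norm_of_nonneg (S.lam'_nonneg ht.le)] at this

/-- The vector whose squared norm is the kinetic part of `energy`. The differential equation
eliminates both `acc` and `G'` from its derivative. -/
def anchor (q t : ℝ) : H := q • (S.x t - S.z) + t • (S.v t + S.β t • S.grad t)

/-- The Lyapunov function of the dynamics. -/
def energy (δ t : ℝ) : ℝ :=
  (t ^ 2 * S.w t + δ * (t * S.β t)) * S.envGap t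
    + 1 / 2 * ‖S.anchor (S.α - 1 - δ) t‖ ^ 2
    + (S.α - 1 - δ) * δ / 2 * ‖S.x t - S.z‖ ^ 2

/-- The derivative of `energy` along the trajectory, with the acceleration eliminated by means of
the differential equation. -/
def energyDeriv (δ t : ℝ) : ℝ :=
  t * ((2 - δ) * S.w t + t * S.w' t + δ * S.b t) * S.envGap t
    - (S.α - 1 - δ) * t * S.w t * ⟪S.grad t, S.x t - S.z⟫_ℝ - δ * (t * ‖S.v t‖ ^ 2)
    - (t * (t * S.w t + δ * S.β t) * S.lam' t / 2 + t ^ 2 * S.β t * S.w t) * ‖S.grad t‖ ^ 2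

/-- The quantity whose integrability the decrease of `energy` provides. -/
def dissipation (t : ℝ) : ℝ := t * (S.b t * S.envGap t + ‖S.v t‖ ^ 2)

lemma acc_eq (ht : S.t₀ ≤ t) :
    S.acc t = -((S.α / t) • S.v t + S.β t • S.G' t + S.b t • S.grad t) := by
  rw [eq_neg_iff_add_eq_zero, ← S.ode t ht, grad]
  abel

lemma hasDerivAt_anchor (ht : S.t₀ < t) (q : ℝ) :
    HasDerivAt (S.anchor q) ((q + 1 - S.α) • S.v t - (t * S.w t) • S.grad t) t := by
  have ht0 : t ≠ 0 := (S.t₀_pos.trans ht).ne'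
  have hgrad : HasDerivAt S.grad (S.G' t) t := S.hasDerivAt_grad t ht.le
  refine ((((S.hasDerivAt_x t ht.le).sub_const S.z).const_smul q).add
    ((hasDerivAt_id t).smul ((S.hasDerivAt_v t ht.le).add
      ((S.hasDerivAt_β t ht.le).smul hgrad)))).congr_deriv ?_
  have hw : t * S.w t = t * S.b t - t * S.β' t - S.β t := by
    unfold w
    field_simp
  obtain ⟨γ, hγ⟩ : ∃ γ, S.α = t * γ := ⟨S.α / t, by field_simp⟩
  rw [S.acc_eq ht.le, hw, hγ, mul_div_cancel_left₀ _ ht0]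
  simp only [id_eq, Pi.add_apply, Pi.smul_apply']
  module

lemma hasDerivAt_energy (ht : S.t₀ < t) (δ : ℝ) :
    HasDerivAt (S.energy δ) (S.energyDeriv δ t) t := by
  have ht0 : t ≠ 0 := (S.t₀_pos.trans ht).ne'
  have hcoeff : HasDerivAt (fun s => s ^ 2 * S.w s + δ * (s * S.β s))
      (2 * t * S.w t + t ^ 2 * S.w' t + δ * (S.β t + t * S.β' t)) t := by
    refine ((((hasDerivAt_id t).pow 2).mul (S.hasDerivAt_w t ht.le)).add
      (((hasDerivAt_id t).mul (S.hasDerivAt_β t ht.le)).const_mul δ)).congr_deriv ?_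
    simp [w]
  refine (((hcoeff.mul (S.hasDerivAt_envGap ht)).add
    ((S.hasDerivAt_anchor ht (S.α - 1 - δ)).norm_sq.const_mul (1 / 2))).add
    (((S.hasDerivAt_x t ht.le).sub_const S.z).norm_sq.const_mul
      ((S.α - 1 - δ) * δ / 2))).congr_deriv ?_
  have hβ : S.β t + t * S.β' t = t * (S.b t - S.w t) := by
    unfold w
    field_simp
    ring
  rw [hβ, energyDeriv, anchor]
  generalize S.x t - S.z = y
  simp only [smul_add, inner_add_left, inner_sub_right, real_inner_smul_left, inner_smul_right,
    real_inner_self_eq_norm_sq]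
  rw [real_inner_comm (S.grad t) (S.v t), real_inner_comm (S.grad t) y]
  ring

lemma energyDeriv_le (ht : S.t₀ ≤ t) (hδ : 0 ≤ δ) (hδα : δ ≤ S.α - 1)
    (hgrowth : 2 * δ * S.b t ≤ (S.α - 3) * S.w t - t * S.w' t) :
    S.energyDeriv δ t ≤ -(δ * S.dissipation t) := by
  have ht0 : 0 < t := S.t₀_pos.trans_le ht
  have hw := S.w_nonneg ht
  have hφ := S.envGap_nonneg ht
  have hβ := S.β_nonneg t ht
  have hlam' := S.lam'_nonneg ht
  have : 0 ≤ S.α - 1 - δ := by linarith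
  have hinner : (S.α - 1 - δ) * t * S.w t * S.envGap t
      ≤ (S.α - 1 - δ) * t * S.w t * ⟪S.grad t, S.x t - S.z⟫_ℝ := by
    gcongr
    exact S.envGap_le_inner_grad ht
  have hscaled : t * S.envGap t * (2 * δ * S.b t)
      ≤ t * S.envGap t * ((S.α - 3) * S.w t - t * S.w' t) := by gcongr
  have hgrad : 0 ≤ (t * (t * S.w t + δ * S.β t) * S.lam' t / 2 + t ^ 2 * S.β t * S.w t)
      * ‖S.grad t‖ ^ 2 := by positivity
  unfold energyDeriv dissipation
  linarith

lemma dissipation_nonneg (ht : S.t₀ ≤ t) : 0 ≤ S.dissipation t := by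
  have := S.t₀_pos.trans_le ht
  have := S.b_nonneg t ht
  have := S.envGap_nonneg ht
  unfold dissipation
  positivity

lemma mul_sq_norm_le_energy (ht : S.t₀ ≤ t) (hδ : 0 ≤ δ) :
    (S.α - 1 - δ) * δ / 2 * ‖S.x t - S.z‖ ^ 2 ≤ S.energy δ t := by
  have := S.t₀_pos.trans_le ht
  have := S.w_nonneg ht
  have := S.envGap_nonneg ht
  have := S.β_nonneg t ht
  exact le_add_of_nonneg_left (by positivity)

lemma continuousOn_dissipation : ContinuousOn S.dissipation (Ioi S.t₀) := fun t ht =>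
  (continuousAt_id.mul (((S.hasDerivAt_b t ht.out.le).continuousAt.mul
    (S.hasDerivAt_envGap ht).continuousAt).add
      ((S.hasDerivAt_v t ht.out.le).continuousAt.norm.pow 2))).continuousWithinAt

lemma integrableOn_dissipation (hT : S.t₀ < T) (hδ : 0 < δ) (hδα : δ ≤ S.α - 1)
    (hgrowth : ∀ t ≥ S.t₀, 2 * δ * S.b t ≤ (S.α - 3) * S.w t - t * S.w' t) :
    IntegrableOn S.dissipation (Ioi T) := by
  have hmeas : AEStronglyMeasurable S.dissipation (volume.restrict (Ioi T)) :=
    (S.continuousOn_dissipation.mono (Ioi_subset_Ioi hT.le)).aestronglyMeasurable measurableSet_Ioi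
  have hnonneg : ∀ t ≥ T, 0 ≤ S.energy δ t := fun t ht => by
    have : 0 ≤ S.α - 1 - δ := by linarith
    exact le_trans (by positivity) (S.mul_sq_norm_le_energy (hT.le.trans ht) hδ.le)
  have hint : IntegrableOn (fun t => δ * S.dissipation t) (Ioi T) :=
    integrableOn_Ioi_of_deriv_le_neg
      (fun t ht => S.hasDerivAt_energy (hT.trans_le ht) δ)
      (fun t ht => S.energyDeriv_le (hT.le.trans ht) hδ.le hδα (hgrowth t (hT.le.trans ht)))
      (fun t ht => mul_nonneg hδ.le (S.dissipation_nonneg (hT.le.trans ht)))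
      (hmeas.const_mul δ) hnonneg
  exact (integrable_const_mul_iff (isUnit_iff_ne_zero.2 hδ.ne') _).1 hint

lemma antitoneOn_energy (hδ : 0 ≤ δ) (hδα : δ ≤ S.α - 1)
    (hgrowth : ∀ t ≥ S.t₀, 2 * δ * S.b t ≤ (S.α - 3) * S.w t - t * S.w' t) :
    AntitoneOn (S.energy δ) (Ioi S.t₀) := by
  refine antitoneOn_of_hasDerivWithinAt_nonpos (f' := S.energyDeriv δ) (convex_Ioi _)
    (fun t ht => (S.hasDerivAt_energy ht δ).continuousAt.continuousWithinAt) ?_ ?_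
  all_goals rw [interior_Ioi]
  · exact fun t ht => (S.hasDerivAt_energy ht δ).hasDerivWithinAt
  · intro t (ht : S.t₀ < t)
    exact (S.energyDeriv_le ht.le hδ hδα (hgrowth t ht.le)).trans
      (neg_nonpos.2 (mul_nonneg hδ (S.dissipation_nonneg ht.le)))

lemma exists_sq_lam_mul_norm_grad_le (hT : S.t₀ < T) (hδ : 0 < δ) (hδα : δ < S.α - 1)
    (hgrowth : ∀ t ≥ S.t₀, 2 * δ * S.b t ≤ (S.α - 3) * S.w t - t * S.w' t) :
    ∃ M, ∀ t ≥ T, (S.lam t * ‖S.grad t‖) ^ 2 ≤ M := by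
  have hcoeff : 0 < (S.α - 1 - δ) * δ / 2 := by
    have : 0 < S.α - 1 - δ := by linarith
    positivity
  refine ⟨S.energy δ T / ((S.α - 1 - δ) * δ / 2), fun t ht => ?_⟩
  have htt₀ : S.t₀ < t := hT.trans_le ht
  have := S.lam_pos t htt₀.le
  calc (S.lam t * ‖S.grad t‖) ^ 2 ≤ ‖S.x t - S.z‖ ^ 2 := by
        gcongr
        exact S.lam_mul_norm_grad_le htt₀.le
    _ ≤ S.energy δ T / ((S.α - 1 - δ) * δ / 2) := by
        rw [le_div_iff₀' hcoeff]
        exact (S.mul_sq_norm_le_energy htt₀.le hδ.le).trans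
          (S.antitoneOn_energy hδ.le hδα.le hgrowth hT htt₀ ht)

/-- The mechanical energy `b (Φ_lam(x) - min Φ) + ‖ẋ‖² / 2`, scaled by `t²`. -/
def mechEnergy (t : ℝ) : ℝ := t ^ 2 * (S.b t * S.envGap t + ‖S.v t‖ ^ 2 / 2)

/-- The derivative of `mechEnergy` along the trajectory, with the acceleration eliminated by means
of the differential equation. -/
def mechEnergyDeriv (t : ℝ) : ℝ :=
  (2 * t * S.b t + t ^ 2 * S.b' t) * S.envGap t - t ^ 2 * S.b t * (S.lam' t / 2 * ‖S.grad t‖ ^ 2)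
    - (S.α - 1) * (t * ‖S.v t‖ ^ 2) - t ^ 2 * S.β t * ⟪S.G' t, S.v t⟫_ℝ

/-- The function whose positive part is assumed to be integrable. -/
def residual (t : ℝ) : ℝ :=
  S.lam' t ^ 2 * t ^ 3 * S.β t ^ 2 / S.lam t ^ 4 - S.lam' t * t ^ 2 * S.b t / (2 * S.lam t ^ 2)

lemma mechEnergy_nonneg (ht : S.t₀ ≤ t) : 0 ≤ S.mechEnergy t := by
  have := S.b_nonneg t ht
  have := S.envGap_nonneg ht
  unfold mechEnergy
  positivity

lemma hasDerivAt_mechEnergy (ht : S.t₀ < t) :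
    HasDerivAt S.mechEnergy (S.mechEnergyDeriv t) t := by
  have ht0 : t ≠ 0 := (S.t₀_pos.trans ht).ne'
  refine (((hasDerivAt_id t).pow 2).mul (((S.hasDerivAt_b t ht.le).mul
    (S.hasDerivAt_envGap ht)).add ((S.hasDerivAt_v t ht.le).norm_sq.div_const 2))).congr_deriv ?_
  rw [S.acc_eq ht.le, mechEnergyDeriv]
  simp only [inner_add_right, inner_neg_right, inner_smul_right, real_inner_self_eq_norm_sq,
    real_inner_comm (S.v t), id_eq, Pi.add_apply, Pi.mul_apply, Pi.pow_apply]
  field_simp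
  ring

-- Young's inequality splits the product of the two norms between `dissipation` and `residual`.
lemma neg_mul_inner_G'_v_le (ht : S.t₀ < t) :
    -(t ^ 2 * S.β t * ⟪S.G' t, S.v t⟫_ℝ)
      ≤ t * ‖S.v t‖ ^ 2 + t * (t * S.β t * (S.lam' t / S.lam t) * ‖S.grad t‖) ^ 2 := by
  have ht0 : 0 < t := S.t₀_pos.trans ht
  have hβ := S.β_nonneg t ht.le
  have hlam := S.lam_pos t ht.le
  have hinner : -⟪S.G' t, S.v t⟫_ℝ ≤ S.lam' t / S.lam t * ‖S.grad t‖ * ‖S.v t‖ := by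
    rw [div_mul_eq_mul_div, div_mul_eq_mul_div, le_div_iff₀ hlam]
    linarith [S.neg_le_mul_inner_G'_v ht]
  calc -(t ^ 2 * S.β t * ⟪S.G' t, S.v t⟫_ℝ) = t ^ 2 * S.β t * -⟪S.G' t, S.v t⟫_ℝ := by ring
    _ ≤ t ^ 2 * S.β t * (S.lam' t / S.lam t * ‖S.grad t‖ * ‖S.v t‖) := by gcongr
    _ = t * (‖S.v t‖ * (t * S.β t * (S.lam' t / S.lam t) * ‖S.grad t‖)) := by ring
    _ ≤ t * (‖S.v t‖ ^ 2 + (t * S.β t * (S.lam' t / S.lam t) * ‖S.grad t‖) ^ 2) := by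
        gcongr
        nlinarith [sq_nonneg (‖S.v t‖ - t * S.β t * (S.lam' t / S.lam t) * ‖S.grad t‖),
          sq_nonneg ‖S.v t‖, sq_nonneg (t * S.β t * (S.lam' t / S.lam t) * ‖S.grad t‖)]
    _ = _ := mul_add _ _ _

lemma mechEnergyDeriv_le_add_residual (ht : S.t₀ < t) (hα : 1 ≤ S.α)
    (hC : 2 * t * S.b t + t ^ 2 * S.b' t ≤ C * (t * S.b t)) :
    S.mechEnergyDeriv t
      ≤ max C 1 * S.dissipation t + (S.lam t * ‖S.grad t‖) ^ 2 * S.residual t := by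
  have ht0 : 0 < t := S.t₀_pos.trans ht
  have hb := S.b_nonneg t ht.le
  have hφ := S.envGap_nonneg ht.le
  have hlam := S.lam_pos t ht.le
  have hpotential : (2 * t * S.b t + t ^ 2 * S.b' t) * S.envGap t
      ≤ max C 1 * (t * S.b t) * S.envGap t := by
    gcongr
    exact hC.trans (by gcongr; exact le_max_left C 1)
  have hkinetic : 1 * (t * ‖S.v t‖ ^ 2) ≤ max C 1 * (t * ‖S.v t‖ ^ 2) := by
    gcongr
    exact le_max_right C 1
  have hdamping : 0 ≤ (S.α - 1) * (t * ‖S.v t‖ ^ 2) := mul_nonneg (by linarith) (by positivity)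
  have hresidual : (S.lam t * ‖S.grad t‖) ^ 2 * S.residual t
      = t * (t * S.β t * (S.lam' t / S.lam t) * ‖S.grad t‖) ^ 2
        - t ^ 2 * S.b t * (S.lam' t / 2 * ‖S.grad t‖ ^ 2) := by
    unfold residual
    field_simp
  rw [hresidual]
  unfold mechEnergyDeriv dissipation
  linarith [S.neg_mul_inner_G'_v_le ht]

lemma mechEnergyDeriv_le (ht : S.t₀ < t) (hα : 1 ≤ S.α)
    (hC : 2 * t * S.b t + t ^ 2 * S.b' t ≤ C * (t * S.b t))
    (hM : (S.lam t * ‖S.grad t‖) ^ 2 ≤ M) :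
    S.mechEnergyDeriv t ≤ max C 1 * S.dissipation t + M * max (S.residual t) 0 := by
  refine (S.mechEnergyDeriv_le_add_residual ht hα hC).trans (add_le_add le_rfl ?_)
  calc (S.lam t * ‖S.grad t‖) ^ 2 * S.residual t
      ≤ (S.lam t * ‖S.grad t‖) ^ 2 * max (S.residual t) 0 := by
        gcongr
        exact le_max_left _ _
    _ ≤ M * max (S.residual t) 0 := mul_le_mul_of_nonneg_right hM (le_max_right _ _)

lemma aemeasurable_residual : AEMeasurable S.residual (volume.restrict (Ici S.t₀)) := by
  have hβ := aemeasurable_restrict_of_hasDerivAt measurableSet_Ici S.hasDerivAt_β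
  have hb := aemeasurable_restrict_of_hasDerivAt measurableSet_Ici S.hasDerivAt_b
  have hlam := aemeasurable_restrict_of_hasDerivAt measurableSet_Ici S.hasDerivAt_lam
  have hlam' := aemeasurable_deriv_restrict_of_hasDerivAt measurableSet_Ici S.hasDerivAt_lam
  unfold residual
  fun_prop

lemma integrableOn_mechEnergy_div (hT : S.t₀ < T) (hint : IntegrableOn S.dissipation (Ioi T)) :
    IntegrableOn (fun t => S.mechEnergy t / t) (Ioi T) := by
  have hmeas : AEStronglyMeasurable (fun t => S.mechEnergy t / t) (volume.restrict (Ioi T)) :=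
    (aemeasurable_restrict_of_hasDerivAt measurableSet_Ioi fun t (ht : T < t) =>
      S.hasDerivAt_mechEnergy (hT.trans ht)).div aemeasurable_id |>.aestronglyMeasurable
  refine hint.mono' hmeas ?_
  filter_upwards [ae_restrict_mem measurableSet_Ioi] with t (ht : T < t)
  have htt₀ : S.t₀ < t := hT.trans ht
  have ht0 : 0 < t := S.t₀_pos.trans htt₀
  rw [Real.norm_of_nonneg (div_nonneg (S.mechEnergy_nonneg htt₀.le) ht0.le), div_le_iff₀ ht0,
    mechEnergy, dissipation]
  have : 0 ≤ t ^ 2 * ‖S.v t‖ ^ 2 := by positivity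
  linarith

theorem tendsto_mechEnergy (hδ : 0 < δ) (hδα : δ < S.α - 1)
    (hgrowth : ∀ t ≥ S.t₀, 2 * δ * S.b t ≤ (S.α - 3) * S.w t - t * S.w' t)
    (hresidual : ∫⁻ t in Ici S.t₀, ENNReal.ofReal (S.residual t) < ⊤)
    (hC : ∀ t ≥ S.t₀, 2 * t * S.b t + t ^ 2 * S.b' t ≤ C * (t * S.b t)) :
    Tendsto S.mechEnergy atTop (𝓝 0) := by
  obtain ⟨T, hT⟩ := exists_gt S.t₀
  obtain ⟨M, hM⟩ := S.exists_sq_lam_mul_norm_grad_le hT hδ hδα hgrowth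
  have hdiss := S.integrableOn_dissipation hT hδ hδα.le hgrowth
  have hres : IntegrableOn (fun t => max (S.residual t) 0) (Ioi T) :=
    IntegrableOn.mono_set
      (integrable_max_zero_of_lintegral_ofReal_lt_top S.aemeasurable_residual hresidual)
      ((Ioi_subset_Ioi hT.le).trans Ioi_subset_Ici_self)
  exact tendsto_zero_of_deriv_le_of_integrableOn_div
    (fun t ht => S.hasDerivAt_mechEnergy (hT.trans_le ht))
    (fun t ht => S.mechEnergyDeriv_le (hT.trans_le ht) (by linarith) (hC t (hT.le.trans ht))
      (hM t ht))
    ((hdiss.const_mul (max C 1)).add (hres.const_mul M))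
    (fun t ht => S.mechEnergy_nonneg (hT.le.trans ht)) (S.integrableOn_mechEnergy_div hT hdiss)

lemma prox_distance_sq_le (ht : S.t₀ ≤ t) :
    (t * √(S.b t) / √(S.lam t) * ‖S.p t - S.x t‖) ^ 2 ≤ 2 * S.mechEnergy t := by
  have hlam := S.lam_pos t ht
  have hb := S.b_nonneg t ht
  have hgap := S.gap_nonneg ht
  have hnorm : ‖S.p t - S.x t‖ = S.lam t * ‖S.grad t‖ := by
    rw [S.p_eq ht, sub_sub_cancel_left, norm_neg, norm_smul, Real.norm_of_nonneg hlam.le]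
  calc (t * √(S.b t) / √(S.lam t) * ‖S.p t - S.x t‖) ^ 2
      = t ^ 2 * S.b t * (S.lam t * ‖S.grad t‖ ^ 2) := by
        rw [hnorm, mul_pow, div_pow, mul_pow, Real.sq_sqrt hb, Real.sq_sqrt hlam.le]
        field_simp
    _ ≤ 2 * S.mechEnergy t := by
        have : 0 ≤ t ^ 2 * S.b t * S.gap t := by positivity
        have : 0 ≤ t ^ 2 * ‖S.v t‖ ^ 2 := by positivity
        unfold mechEnergy envGap
        linarith

theorem tendsto_prox_distance (hmech : Tendsto S.mechEnergy atTop (𝓝 0)) :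
    Tendsto (fun t => t * √(S.b t) / √(S.lam t) * ‖S.p t - S.x t‖) atTop (𝓝 0) := by
  have hsqrt : Tendsto (fun t => √(2 * S.mechEnergy t)) atTop (𝓝 0) := by
    simpa using (hmech.const_mul 2).sqrt
  refine squeeze_zero_norm' ?_ hsqrt
  filter_upwards [eventually_ge_atTop S.t₀] with t ht
  exact Real.abs_le_sqrt (S.prox_distance_sq_le ht)

end ProxFlow

end ProxFlow

theorem prox_distance_little_o_general
    {H : Type*} [NormedAddCommGroup H] [InnerProductSpace ℝ H]
    {Φ : H → EReal}
    (hΦbot : ∀ y, Φ y ≠ ⊥) (hΦproper : ∃ y, Φ y ≠ ⊤) (hΦconv : EConvexOn Φ)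
    {t₀ α : ℝ} (ht₀ : 0 < t₀)
    {β b lam β' b' lam' w' : ℝ → ℝ}
    (hβnonneg : ∀ t ≥ t₀, 0 ≤ β t)
    (hbnonneg : ∀ t ≥ t₀, 0 ≤ b t)
    (hlampos : ∀ t ≥ t₀, 0 < lam t)
    (hβ' : ∀ t ≥ t₀, HasDerivAt β (β' t) t)
    (hb' : ∀ t ≥ t₀, HasDerivAt b (b' t) t)
    (hlam' : ∀ t ≥ t₀, HasDerivAt lam (lam' t) t)
    (hw' : ∀ t ≥ t₀, HasDerivAt (fun s => b s - β' s - β s / s) (w' t) t)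
    {x v acc p G' : ℝ → H}
    (hx : ∀ t ≥ t₀, HasDerivAt x (v t) t)
    (hv : ∀ t ≥ t₀, HasDerivAt v (acc t) t)
    (hp : ∀ t ≥ t₀, IsProxPt Φ (lam t) (x t) (p t))
    (hG' : ∀ t ≥ t₀, HasDerivAt (fun s => (lam s)⁻¹ • (x s - p s)) (G' t) t)
    (hode : ∀ t ≥ t₀, acc t + (α / t) • v t + β t • G' t + b t • ((lam t)⁻¹ • (x t - p t)) = 0)
    (hα : 1 < α)
    (hlammono : MonotoneOn lam (Ici t₀))
    (hw : ∀ t ≥ t₀, β' t + β t / t ≤ b t)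
    {ε : ℝ} (hε : 0 < ε)
    (hgrowth : ∀ t ≥ t₀, ε * b t ≤ (α - 3) * (b t - β' t - β t / t) - t * w' t)
    (hresidual : ∫⁻ t in Ici t₀, ENNReal.ofReal (lam' t ^ 2 * t ^ 3 * β t ^ 2 / lam t ^ 4
      - lam' t * t ^ 2 * b t / (2 * lam t ^ 2)) < ⊤)
    {C : ℝ} (hC : ∀ t ≥ t₀, 2 * t * b t + t ^ 2 * b' t ≤ C * (t * b t))
    {z : H} (hz : ∀ y, Φ z ≤ Φ y) :
    Tendsto (fun t => t * √(b t) / √(lam t) * ‖p t - x t‖) atTop (𝓝 0) := by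
  obtain ⟨y, hy⟩ := hΦproper
  let S : ProxFlow Φ :=
    { t₀, α, β, b, lam, β', b', lam', w', x, v, acc, p, G', z
      t₀_pos := ht₀, ne_bot := hΦbot, convex := hΦconv, z_ne_top := ne_top_of_le_ne_top hy (hz y),
      z_le := hz, β_nonneg := hβnonneg, b_nonneg := hbnonneg, lam_pos := hlampos,
      monotoneOn_lam := hlammono, le_b := hw, hasDerivAt_β := hβ', hasDerivAt_b := hb',
      hasDerivAt_lam := hlam', hasDerivAt_w := hw', hasDerivAt_x := hx, hasDerivAt_v := hv,
      hasDerivAt_grad := hG', isProxPt := hp, ode := hode }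
  have hmin : 0 < min ε (α - 1) := lt_min hε (by linarith)
  have hδα : min ε (α - 1) / 2 < α - 1 := by linarith [min_le_right ε (α - 1)]
  have hgrowth' : ∀ t ≥ t₀, 2 * (min ε (α - 1) / 2) * b t
      ≤ (α - 3) * (b t - β' t - β t / t) - t * w' t := fun t ht => by
    rw [mul_div_cancel₀ _ two_ne_zero]
    exact (mul_le_mul_of_nonneg_right (min_le_left _ _) (hbnonneg t ht)).trans (hgrowth t ht)
  exact S.tendsto_prox_distance (S.tendsto_mechEnergy (half_pos hmin) hδα hgrowth' hresidual hC)

theorem prox_distance_little_o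
    {H : Type*} [NormedAddCommGroup H] [InnerProductSpace ℝ H] [CompleteSpace H]
    (Φ : H → EReal)
    (hΦbot : ∀ y, Φ y ≠ ⊥) (hΦproper : ∃ y, Φ y ≠ ⊤)
    (hΦconv : EConvexOn Φ) (hΦlsc : LowerSemicontinuous Φ)
    (t₀ α : ℝ) (ht₀ : 0 < t₀)
    (β b lam β' b' lam' w' : ℝ → ℝ)
    (hβnonneg : ∀ t ≥ t₀, 0 ≤ β t)
    (hbpos : ∀ t ≥ t₀, 0 < b t)
    (hlampos : ∀ t ≥ t₀, 0 < lam t)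
    (hβ' : ∀ t ≥ t₀, HasDerivAt β (β' t) t)
    (hb' : ∀ t ≥ t₀, HasDerivAt b (b' t) t)
    (hlam' : ∀ t ≥ t₀, HasDerivAt lam (lam' t) t)
    (hw' : ∀ t ≥ t₀, HasDerivAt (fun s => b s - β' s - β s / s) (w' t) t)
    (x v acc p G' : ℝ → H)
    (hx : ∀ t ≥ t₀, HasDerivAt x (v t) t)
    (hv : ∀ t ≥ t₀, HasDerivAt v (acc t) t)
    (hp : ∀ t ≥ t₀, IsProxPt Φ (lam t) (x t) (p t))
    (hG' : ∀ t ≥ t₀, HasDerivAt (fun s => (lam s)⁻¹ • (x s - p s)) (G' t) t)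
    (hode : ∀ t ≥ t₀, acc t + (α / t) • v t + β t • G' t
        + b t • ((lam t)⁻¹ • (x t - p t)) = 0)
    (hα : 1 < α)
    (hlammono : MonotoneOn lam (Set.Ici t₀))
    (hβmono : MonotoneOn β (Set.Ici t₀))
    (hw : ∀ t ≥ t₀, β' t + β t / t < b t)
    (hAs2 : ∃ ε, 0 < ε ∧ ε < α - 1 ∧
      ∀ t ≥ t₀, ε * b t ≤ (α - 3) * (b t - β' t - β t / t) - t * w' t)
    (hAs4 : ∫⁻ t in Set.Ici t₀, ENNReal.ofReal ((lam' t) ^ 2 * t ^ 3 * (β t) ^ 2 / (lam t) ^ 4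
      - lam' t * t ^ 2 * b t / (2 * (lam t) ^ 2)) < ⊤)
    (hAs : ∃ C > (0 : ℝ), ∀ t ≥ t₀, 2 * t * b t + t ^ 2 * b' t ≤ C * (t * b t))
    (hargmin : ∃ z, ∀ y, Φ z ≤ Φ y)
    :
    Filter.Tendsto (fun t => t * Real.sqrt (b t) / Real.sqrt (lam t) * ‖p t - x t‖)
      Filter.atTop (nhds 0) := by
  obtain ⟨ε, hε, -, hgrowth⟩ := hAs2
  obtain ⟨C, -, hC⟩ := hAs
  obtain ⟨z, hz⟩ := hargmin
  exact prox_distance_little_o_general hΦbot hΦproper hΦconv ht₀ hβnonneg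
    (fun t ht => (hbpos t ht).le) hlampos hβ' hb' hlam' hw' hx hv hp hG' hode hα hlammono
    (fun t ht => (hw t ht).le) hε hgrowth hAs4 hC hz
end
end

section
/- Let t₀ > 0, α > 1, n, m ∈ ℝ, β ≥ 0 and b > 0 with α − 3 > n, 0 ≤ m ≤ n + 1, and b > β·(m+1)·(α−m−2)/((α−3−n)·t₀^{n−m+1}). Define b(t) = b·tⁿ, β(t) = β·t^m and w(t) = b(t) − β'(t) − β(t)/t = b·tⁿ − β·(m+1)·t^{m−1} for t ≥ t₀. Then there exists ε ∈ (0, α−1) such that (α−3)·w(t) − t·w'(t) ≥ ε·b(t) for every t ≥ t₀. -/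
open Real

/-!
The operator `w ↦ r w - t w'` is diagonal on powers: it multiplies `t ^ p` by `r - p`. Hence, with
`w = a t ^ p - c t ^ q`, the inequality `ε a t ^ p ≤ r w - t w'` says that
`(r - q) c t ^ q ≤ (r - p - ε) a t ^ p`. As `q ≤ p`, this holds on all of `[t₀, ∞)` as soon as it
holds at `t₀` and the right-hand coefficient is nonnegative. At `t₀` it is strict for `ε = 0`, which
leaves room for a small positive `ε`.
-/

section

variable {t₀ t a c p q r u : ℝ}

lemma mul_deriv_rpow_const (ht : t ≠ 0) (p : ℝ) :
    t * deriv (fun s : ℝ => s ^ p) t = p * t ^ p := by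
  rw [Real.deriv_rpow_const, rpow_sub_one ht]
  field_simp

lemma mul_sub_mul_deriv_rpow_sub_rpow (ht : t ≠ 0) (r a c p q : ℝ) :
    r * (a * t ^ p - c * t ^ q) - t * deriv (fun s : ℝ => a * s ^ p - c * s ^ q) t =
      (r - p) * (a * t ^ p) - (r - q) * c * t ^ q := by
  have hdiff (x : ℝ) : DifferentiableAt ℝ (fun s : ℝ => s ^ x) t :=
    differentiableAt_rpow_const_of_ne x ht
  rw [deriv_fun_sub ((hdiff p).const_mul a) ((hdiff q).const_mul c),
    deriv_const_mul_field, deriv_const_mul_field]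
  linear_combination -a * mul_deriv_rpow_const ht p + c * mul_deriv_rpow_const ht q

lemma mul_rpow_le_mul_rpow_of_le_mul_rpow_sub (ht₀ : 0 < t₀) (ht : t₀ ≤ t) (hqp : q ≤ p)
    (ha : 0 ≤ a) (hc : c ≤ a * t₀ ^ (p - q)) : c * t ^ q ≤ a * t ^ p := by
  have ht_pos : 0 < t := ht₀.trans_le ht
  calc
    c * t ^ q ≤ a * t ^ (p - q) * t ^ q := by
      gcongr
      exact hc.trans (by gcongr)
    _ = a * t ^ p := by rw [mul_assoc, ← rpow_add ht_pos, sub_add_cancel]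

lemma exists_eps_mul_rpow_le_mul_sub_mul_deriv (ht₀ : 0 < t₀) (hu : 0 < u) (ha : 0 < a)
    (hpr : p < r) (hqp : q ≤ p) (hc : (r - q) * c < (r - p) * a * t₀ ^ (p - q)) :
    ∃ ε, 0 < ε ∧ ε < u ∧ ∀ t ≥ t₀,
      ε * (a * t ^ p) ≤
        r * (a * t ^ p - c * t ^ q) - t * deriv (fun s : ℝ => a * s ^ p - c * s ^ q) t := by
  have ha₀ : 0 < a * t₀ ^ (p - q) := mul_pos ha (rpow_pos_of_pos ht₀ _)
  have hgap : 0 < r - p - (r - q) * c / (a * t₀ ^ (p - q)) := by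
    rw [sub_pos, div_lt_iff₀ ha₀, ← mul_assoc]
    exact hc
  obtain ⟨ε, hε_pos, hε⟩ := exists_between (lt_min hu (lt_min (sub_pos.2 hpr) hgap))
  obtain ⟨hεu, hεr, hεgap⟩ : ε < u ∧ ε < r - p ∧ ε < r - p - (r - q) * c / (a * t₀ ^ (p - q)) := by
    simpa only [lt_min_iff] using hε
  refine ⟨ε, hε_pos, hεu, fun t ht => ?_⟩
  have hcoeff : (r - q) * c ≤ (r - p - ε) * a * t₀ ^ (p - q) := by
    rw [mul_assoc _ a, ← div_le_iff₀ ha₀]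
    linarith
  have hpow : (r - q) * c * t ^ q ≤ (r - p - ε) * a * t ^ p :=
    mul_rpow_le_mul_rpow_of_le_mul_rpow_sub ht₀ ht hqp
      (mul_nonneg (sub_nonneg.2 hεr.le) ha.le) hcoeff
  rw [mul_sub_mul_deriv_rpow_sub_rpow (ht₀.trans_le ht).ne']
  linarith

end

theorem polynomial_parameters_eps_condition_general
    (t₀ α n m β b : ℝ) (ht₀ : 0 < t₀) (hα : 1 < α) (hb : 0 < b)
    (hn : α - 3 > n) (hm1 : m ≤ n + 1)
    (hbgt : b > β * (m + 1) * (α - m - 2) / ((α - 3 - n) * t₀ ^ (n - m + 1))) :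
    ∃ ε, 0 < ε ∧ ε < α - 1 ∧ ∀ t ≥ t₀,
      ε * (b * t ^ n) ≤
        (α - 3) * (b * t ^ n - β * (m + 1) * t ^ (m - 1))
          - t * deriv (fun s : ℝ => b * s ^ n - β * (m + 1) * s ^ (m - 1)) t := by
  have hden : 0 < (α - 3 - n) * t₀ ^ (n - m + 1) :=
    mul_pos (sub_pos.2 hn) (rpow_pos_of_pos ht₀ _)
  have hcoeff : (α - 3 - (m - 1)) * (β * (m + 1)) < (α - 3 - n) * b * t₀ ^ (n - (m - 1)) := by
    rw [gt_iff_lt, div_lt_iff₀ hden] at hbgt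
    rw [← sub_add n m 1]
    linarith
  exact exists_eps_mul_rpow_le_mul_sub_mul_deriv ht₀ (sub_pos.2 hα) hb hn
    (sub_le_iff_le_add.2 hm1) hcoeff

theorem polynomial_parameters_eps_condition
    (t₀ α n m β b : ℝ) (ht₀ : 0 < t₀) (hα : 1 < α) (hβ : 0 ≤ β) (hb : 0 < b)
    (hn : α - 3 > n) (hm0 : 0 ≤ m) (hm1 : m ≤ n + 1)
    (hbgt : b > β * (m + 1) * (α - m - 2) / ((α - 3 - n) * t₀ ^ (n - m + 1))) :
    ∃ ε, 0 < ε ∧ ε < α - 1 ∧ ∀ t ≥ t₀,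
      ε * (b * t ^ n) ≤
        (α - 3) * (b * t ^ n - β * (m + 1) * t ^ (m - 1))
          - t * deriv (fun s : ℝ => b * s ^ n - β * (m + 1) * s ^ (m - 1)) t :=
  polynomial_parameters_eps_condition_general t₀ α n m β b ht₀ hα hb hn hm1 hbgt
end
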